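/- arXiv:1601.05584 — 5 statements merged into one kernel-verified Lean document; each statement's English description precedes it below -/
import Mathlib

section
/- Under the regularization setup, suppose ρ, r, θ, γ > 0 and λ > 0 satisfy: (i) for every h ∈ F with Ψ(h − f*) ≤ ρ and ‖h − f*‖_{L²(μ)} ≥ r one has P_N Q_{h−f*} + 2 P_N M_{h−f*} ≥ (θ/2)‖h − f*‖²_{L²(μ)}; (ii) for every h ∈ F with Ψ(h − f*) ≤ ρ and ‖h − f*‖_{L²(μ)} ≤ r one has |P_N M_{h−f*}| ≤ γ; (iii) Δ(ρ) := inf{ sup_{z* ∈ Γ_{f*}(ρ)} z*(h − f*) : h ∈ F, Ψ(h − f*) = ρ, ‖h − f*‖_{L²(μ)} ≤ r } ≥ 4ρ/5; and (iv) 3γ/ρ ≤ λ < (θ/2)·r²/ρ. Then every f̂ ∈ F minimizing f ↦ (1/N)∑_{i=1}^N (y_i − f(x_i))² + λΨ(f) over F satisfies Ψ(f̂ − f*) ≤ ρ and ‖f̂ − f*‖_{L²(μ)} ≤ r. -/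
open MeasureTheory

/-!
The regularized risk is convex, so if it exceeds its value at `f*` on the part of the sphere
`Ψ (f - f*) = ρ` lying in `F`, it does so outside the sphere as well, and a minimizer must lie
inside. On that sphere there are two cases. Where the `L²` distance to `f*` is at least `r`, the
empirical risk grows by more than `λρ`, which is the most that the penalty `λΨ` can lose. Where it
is at most `r`, the empirical risk loses at most `2γ`, but a functional of dual norm one that is
norming near `f*` is an approximate subgradient of `Ψ` at `f*`, so the sparsity condition makes the
penalty grow by at least `λ(4ρ/5 - 2ρ/20)`. The first case applies in the whole `Ψ`-ball, and so
also bounds the `L²` distance of the minimizer.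
-/

section Norming

variable {E : Type*} [AddCommGroup E] [Module ℝ E] {Ψ : Seminorm ℝ E}

/-- The set `Γ_f(ε)` of linear functionals of dual norm one that are norming for some point of the
`Ψ`-ball of radius `ε` around `f`. The functionals are not assumed continuous: the supremum of a set
of reals that is not bounded above is `0`, so dual norm one already forces boundedness. -/
def normingFunctionals (Ψ : Seminorm ℝ E) (f : E) (ε : ℝ) : Set (E →ₗ[ℝ] ℝ) :=
  {z | sSup {c | ∃ a, Ψ a ≤ 1 ∧ c = z a} = 1 ∧ ∃ v, Ψ (v - f) ≤ ε ∧ z v = Ψ v}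

/-- The supremum of `z h` over `z ∈ Γ_f(ε)`, whose infimum over the directions `h` of interest is
the sparsity parameter `Δ`. It is `0` when `Γ_f(ε)` is empty. -/
noncomputable def normingSup (Ψ : Seminorm ℝ E) (f : E) (ε : ℝ) (h : E) : ℝ :=
  sSup {c | ∃ z ∈ normingFunctionals Ψ f ε, c = z h}

theorem apply_le_seminorm_of_forall_unitBall {z : E →ₗ[ℝ] ℝ} (hz : ∀ a, Ψ a ≤ 1 → z a ≤ 1)
    (a : E) : z a ≤ Ψ a := by
  refine le_of_forall_gt_imp_ge_of_dense fun t ht => ?_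
  have ht0 : 0 < t := (apply_nonneg Ψ a).trans_lt ht
  have hball : Ψ (t⁻¹ • a) ≤ 1 := by
    rw [map_smul_eq_mul, Real.norm_of_nonneg (inv_nonneg.2 ht0.le), inv_mul_le_one₀ ht0]
    exact ht.le
  simpa only [map_smul, smul_eq_mul, inv_mul_le_one₀ ht0] using hz _ hball

theorem apply_le_seminorm_of_mem_normingFunctionals {f : E} {ε : ℝ} {z : E →ₗ[ℝ] ℝ}
    (hz : z ∈ normingFunctionals Ψ f ε) (a : E) : z a ≤ Ψ a := by
  have hbdd : BddAbove {c | ∃ a, Ψ a ≤ 1 ∧ c = z a} := by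
    by_contra h
    exact zero_ne_one ((Real.sSup_of_not_bddAbove h).symm.trans hz.1)
  exact apply_le_seminorm_of_forall_unitBall
    (fun b hb => (le_csSup hbdd ⟨b, hb, rfl⟩).trans_eq hz.1) a

theorem apply_sub_le_of_mem_normingFunctionals {f : E} {ε : ℝ} {z : E →ₗ[ℝ] ℝ}
    (hz : z ∈ normingFunctionals Ψ f ε) (g : E) : z (g - f) ≤ Ψ g - Ψ f + 2 * ε := by
  have hle := apply_le_seminorm_of_mem_normingFunctionals hz
  obtain ⟨-, v, hvf, hzv⟩ := hz
  have htri : Ψ f ≤ Ψ v + Ψ (v - f) := by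
    simpa only [sub_sub_cancel] using map_sub_le_add Ψ v (v - f)
  calc z (g - f) = z g - z v + z (v - f) := by simp only [map_sub]; ring
    _ ≤ Ψ g - Ψ v + Ψ (v - f) := by rw [hzv]; gcongr <;> apply hle
    _ ≤ Ψ g - Ψ f + 2 * ε := by linarith

theorem normingSup_sub_le {f g : E} {ε : ℝ} (hpos : 0 < normingSup Ψ f ε (g - f)) :
    normingSup Ψ f ε (g - f) ≤ Ψ g - Ψ f + 2 * ε := by
  have hne : {c | ∃ z ∈ normingFunctionals Ψ f ε, c = z (g - f)}.Nonempty := by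
    refine Set.nonempty_iff_ne_empty.2 fun hempty => hpos.ne' ?_
    rw [normingSup, hempty, Real.sSup_empty]
  refine csSup_le hne ?_
  rintro _ ⟨z, hz, rfl⟩
  exact apply_sub_le_of_mem_normingFunctionals hz g

end Norming

section Localization

variable {E : Type*} [AddCommGroup E] [Module ℝ E] {Ψ : Seminorm ℝ E} {F : Set E} {fstar fhat : E}
  {ρ : ℝ}

theorem seminorm_sub_lt_of_forall_sphere_lt {φ : E → ℝ} (hφ : ConvexOn ℝ Set.univ φ)
    (hF : StarConvex ℝ fstar F) (hρ : 0 < ρ)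
    (hsphere : ∀ f ∈ F, Ψ (f - fstar) = ρ → φ fstar < φ f)
    (hfhat : fhat ∈ F) (hle : φ fhat ≤ φ fstar) : Ψ (fhat - fstar) < ρ := by
  by_contra! hfar
  have hpos : 0 < Ψ (fhat - fstar) := hρ.trans_le hfar
  set α := ρ / Ψ (fhat - fstar) with hα
  have hα0 : 0 ≤ α := by positivity
  have hα1 : 0 ≤ 1 - α := sub_nonneg.2 ((div_le_one hpos).2 hfar)
  have hsum : 1 - α + α = 1 := sub_add_cancel 1 α
  have hnorm : Ψ ((1 - α) • fstar + α • fhat - fstar) = ρ := by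
    rw [show (1 - α) • fstar + α • fhat - fstar = α • (fhat - fstar) by module,
      map_smul_eq_mul, Real.norm_of_nonneg hα0, hα, div_mul_cancel₀ _ hpos.ne']
  have hseg : φ ((1 - α) • fstar + α • fhat) ≤ φ fstar :=
    (hφ.le_on_segment' (Set.mem_univ _) (Set.mem_univ _) hα1 hα0 hsum).trans_eq (max_eq_left hle)
  exact hseg.not_gt (hsphere _ (hF hfhat hα1 hα0 hsum) hnorm)

theorem seminorm_sub_lt_and_lt_of_regularized_le {R d : E → ℝ} (hR : ConvexOn ℝ Set.univ R)
    (hF : StarConvex ℝ fstar F) {r γ Δ ε lam : ℝ} (hρ : 0 < ρ) (hΔ : 0 < Δ) (hlam : 0 ≤ lam)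
    (hfar : ∀ f ∈ F, Ψ (f - fstar) ≤ ρ → r ≤ d (f - fstar) → lam * ρ < R f - R fstar)
    (hnear : ∀ f ∈ F, Ψ (f - fstar) = ρ → d (f - fstar) ≤ r → -(2 * γ) ≤ R f - R fstar)
    (hsparse : ∀ f ∈ F, Ψ (f - fstar) = ρ → d (f - fstar) ≤ r →
      Δ ≤ normingSup Ψ fstar ε (f - fstar))
    (hγ : 2 * γ < lam * (Δ - 2 * ε))
    (hfhat : fhat ∈ F) (hle : R fhat + lam * Ψ fhat ≤ R fstar + lam * Ψ fstar) :
    Ψ (fhat - fstar) < ρ ∧ d (fhat - fstar) < r := by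
  have hlt_of_far : ∀ f ∈ F, Ψ (f - fstar) ≤ ρ → r ≤ d (f - fstar) →
      R fstar + lam * Ψ fstar < R f + lam * Ψ f := by
    intro f hf hfρ hfr
    have htri : Ψ fstar ≤ Ψ f + Ψ (f - fstar) := by
      simpa only [sub_sub_cancel] using map_sub_le_add Ψ f (f - fstar)
    have hpen : lam * Ψ fstar ≤ lam * (Ψ f + ρ) := by gcongr; linarith
    linarith [hfar f hf hfρ hfr]
  have hlt_of_near : ∀ f ∈ F, Ψ (f - fstar) = ρ → d (f - fstar) ≤ r →
      R fstar + lam * Ψ fstar < R f + lam * Ψ f := by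
    intro f hf hfρ hfr
    have hΔf := hsparse f hf hfρ hfr
    have hsub := normingSup_sub_le (hΔ.trans_le hΔf)
    have hpen : lam * (Δ - 2 * ε) ≤ lam * (Ψ f - Ψ fstar) :=
      mul_le_mul_of_nonneg_left (by linarith) hlam
    linarith [hnear f hf hfρ hfr]
  have hconv : ConvexOn ℝ Set.univ fun f => R f + lam * Ψ f := hR.add (Ψ.convexOn.smul hlam)
  have hball : Ψ (fhat - fstar) < ρ := by
    refine seminorm_sub_lt_of_forall_sphere_lt hconv hF hρ (fun f hf hfρ => ?_) hfhat hle
    rcases le_total r (d (f - fstar)) with hfr | hfr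
    · exact hlt_of_far f hf hfρ.le hfr
    · exact hlt_of_near f hf hfρ hfr
  exact ⟨hball, not_le.1 fun hfr => (hlt_of_far fhat hfhat hball.le hfr).not_ge hle⟩

end Localization

theorem convexOn_finset_sum {ι V : Type*} [AddCommGroup V] [Module ℝ V] {s : Set V}
    (hs : Convex ℝ s) (t : Finset ι) {φ : ι → V → ℝ} (hφ : ∀ i ∈ t, ConvexOn ℝ s (φ i)) :
    ConvexOn ℝ s fun v => ∑ i ∈ t, φ i v := by
  simpa only [Finset.sum_fn] using
    Finset.sum_induction φ (ConvexOn ℝ s) (fun _ _ => ConvexOn.add) (convexOn_const 0 hs) hφ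

section LeastSquares

variable {Ω : Type*} {N : ℕ} (x : Fin N → Ω) (y : Fin N → ℝ)

/-- The empirical squared risk `(1/N) ∑ (yᵢ - g(xᵢ))²`. -/
noncomputable def empiricalRisk (g : Ω → ℝ) : ℝ :=
  (1 / (N : ℝ)) * ∑ i, (y i - g (x i)) ^ 2

/-- The quadratic empirical quantity `P_N Q_h`. -/
noncomputable def empiricalQuadratic (h : Ω → ℝ) : ℝ :=
  (1 / (N : ℝ)) * ∑ i, h (x i) ^ 2

/-- The empirical part `(1/N) ∑ ξᵢ h(xᵢ)`, `ξᵢ = f(xᵢ) - yᵢ`, of the multiplier quantity `P_N M_h`,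
without the centering term `𝔼[ξ h(X)]`. -/
noncomputable def empiricalMultiplier (f h : Ω → ℝ) : ℝ :=
  (1 / (N : ℝ)) * ∑ i, (f (x i) - y i) * h (x i)

theorem empiricalQuadratic_nonneg (h : Ω → ℝ) : 0 ≤ empiricalQuadratic x h := by
  unfold empiricalQuadratic
  positivity

theorem empiricalRisk_sub_empiricalRisk (g f : Ω → ℝ) :
    empiricalRisk x y g - empiricalRisk x y f =
      empiricalQuadratic x (g - f) + 2 * empiricalMultiplier x y f (g - f) := by
  simp only [empiricalRisk, empiricalQuadratic, empiricalMultiplier, Finset.mul_sum,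
    ← Finset.sum_sub_distrib, ← Finset.sum_add_distrib, Pi.sub_apply]
  exact Finset.sum_congr rfl fun i _ => by ring

theorem convexOn_empiricalRisk : ConvexOn ℝ Set.univ (empiricalRisk x y) := by
  have hterm (i : Fin N) : ConvexOn ℝ Set.univ fun g : Ω → ℝ => (y i - g (x i)) ^ 2 :=
    even_two.convexOn_pow.comp_affineMap
      (AffineMap.const ℝ (Ω → ℝ) (y i) - (LinearMap.proj (x i)).toAffineMap)
  exact (convexOn_finset_sum convex_univ Finset.univ fun i _ => hterm i).smul (by positivity)

end LeastSquares

-- `d` stands for the `L²` norm and `m h` for `𝔼[ξ h(X)]`.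
theorem stmt0_general {Ω E : Type*} [AddCommGroup E] [Module ℝ E] (j : E →ₗ[ℝ] (Ω → ℝ))
    (Ψ : Seminorm ℝ E) {F : Set E} {fstar : E} (hF : StarConvex ℝ fstar F) (d m : E → ℝ)
    (hm : ∀ f ∈ F, 0 ≤ m (f - fstar)) {N : ℕ} (x : Fin N → Ω) (y : Fin N → ℝ)
    {ρ r θ γ lam : ℝ} (hρ : 0 < ρ) (hr : 0 ≤ r) (hθ : 0 ≤ θ) (hγ : 0 < γ)
    (hi : ∀ h ∈ F, Ψ (h - fstar) ≤ ρ → r ≤ d (h - fstar) →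
      θ / 2 * d (h - fstar) ^ 2 ≤ empiricalQuadratic x (j (h - fstar)) +
        2 * (empiricalMultiplier x y (j fstar) (j (h - fstar)) - m (h - fstar)))
    (hii : ∀ h ∈ F, Ψ (h - fstar) = ρ → d (h - fstar) ≤ r →
      -γ ≤ empiricalMultiplier x y (j fstar) (j (h - fstar)) - m (h - fstar))
    (hiii : ∀ h ∈ F, Ψ (h - fstar) = ρ → d (h - fstar) ≤ r →
      4 * ρ / 5 ≤ normingSup Ψ fstar (ρ / 20) (h - fstar))
    (hlam1 : 3 * γ / ρ ≤ lam) (hlam2 : lam < θ / 2 * r ^ 2 / ρ)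
    {fhat : E} (hfhat : fhat ∈ F)
    (hle : empiricalRisk x y (j fhat) + lam * Ψ fhat ≤
      empiricalRisk x y (j fstar) + lam * Ψ fstar) :
    Ψ (fhat - fstar) < ρ ∧ d (fhat - fstar) < r := by
  have hlam : 0 < lam := lt_of_lt_of_le (by positivity) hlam1
  have hγlam : 3 * γ ≤ lam * ρ := (div_le_iff₀ hρ).1 hlam1
  have hlamr : lam * ρ < θ / 2 * r ^ 2 := (lt_div_iff₀ hρ).1 hlam2
  have hexcess (f : E) : empiricalRisk x y (j f) - empiricalRisk x y (j fstar) =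
      empiricalQuadratic x (j (f - fstar)) +
        2 * empiricalMultiplier x y (j fstar) (j (f - fstar)) := by
    rw [empiricalRisk_sub_empiricalRisk, map_sub]
  refine seminorm_sub_lt_and_lt_of_regularized_le (R := fun f => empiricalRisk x y (j f))
    ((convexOn_empiricalRisk x y).comp_linearMap j) hF hρ (by positivity) hlam.le
    (fun f hf hfρ hfr => ?_) (fun f hf hfρ hfr => ?_) hiii (γ := γ) (by linarith) hfhat hle
  · have hgrowth : θ / 2 * r ^ 2 ≤ θ / 2 * d (f - fstar) ^ 2 := by gcongr
    linarith [hexcess f, hi f hf hfρ hfr, hm f hf]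
  · linarith [hexcess f, hii f hf hfρ hfr, hm f hf, empiricalQuadratic_nonneg x (j (f - fstar))]

/-- the main theorem (Theorem 3.1 / `lemma:basic-combining-loss-and-reg`):
under the deterministic events (i) quadratic-plus-multiplier lower bound outside the
`L²` ball of radius `r`, (ii) control of the multiplier process inside it,
(iii) the sparsity condition `Δ(ρ) ≥ 4ρ/5`, and (iv) the choice of the regularization
parameter `3γ/ρ ≤ λ < (θ/2) r²/ρ`, any regularized empirical minimizer `f̂` satisfies
`Ψ(f̂ - f*) ≤ ρ` and `‖f̂ - f*‖_{L²(μ)} ≤ r`. -/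
theorem stmt0
    {Ω : Type*} [MeasurableSpace Ω] (ν : Measure (Ω × ℝ)) [IsProbabilityMeasure ν]
    {E : Type*} [AddCommGroup E] [Module ℝ E]
    -- `E` is realized as a linear subspace of functions on `Ω` via the injection `j`
    (j : E →ₗ[ℝ] (Ω → ℝ)) (hj : Function.Injective j)
    -- `Ψ` is a norm on `E`
    (Ψ : E → ℝ)
    (hΨ_nonneg : ∀ a, 0 ≤ Ψ a)
    (hΨ_add : ∀ a b, Ψ (a + b) ≤ Ψ a + Ψ b)
    (hΨ_smul : ∀ (c : ℝ) (a : E), Ψ (c • a) = |c| * Ψ a)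
    (hΨ_eq : ∀ a, Ψ a = 0 ↔ a = 0)
    -- `F` is convex, `f* ∈ F`
    (F : Set E) (hFconv : Convex ℝ F)
    (fstar : E) (hfstarF : fstar ∈ F)
    -- members of `F` are square integrable (i.e. `E ⊆ L²(μ)` where relevant)
    (hsq : ∀ f ∈ F, Integrable (fun p => (j f p.1) ^ 2) ν)
    -- the `L²(μ)` norm, `μ` being the first marginal of the joint law `ν` of `(X,Y)`
    (l2 : E → ℝ) (hl2 : ∀ h, l2 h = Real.sqrt (∫ p, (j h p.1) ^ 2 ∂ν))
    -- the variational inequality satisfied by the `L²` minimizer over the convex class: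
    -- `ξ·(f-f*)(X)` is integrable and `𝔼[ξ·(f-f*)(X)] ≥ 0` where `ξ = f*(X) - Y`
    (hvar : ∀ f ∈ F, Integrable (fun p => (j fstar p.1 - p.2) * j (f - fstar) p.1) ν ∧
      0 ≤ ∫ p, (j fstar p.1 - p.2) * j (f - fstar) p.1 ∂ν)
    -- the sample
    (N : ℕ) (hN : 0 < N) (x : Fin N → Ω) (y : Fin N → ℝ)
    (ρ r θ γ lam : ℝ) (hρ : 0 < ρ) (hr : 0 < r) (hθ : 0 < θ) (hγ : 0 < γ)
    -- (i) : `P_N Q_{h-f*} + 2 P_N M_{h-f*} ≥ (θ/2)‖h-f*‖²` on the `Ψ`-ball, outside the `L²`-ball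
    (hi : ∀ h ∈ F, Ψ (h - fstar) ≤ ρ → r ≤ l2 (h - fstar) →
      θ / 2 * l2 (h - fstar) ^ 2 ≤
        (1 / (N : ℝ)) * ∑ i, (j (h - fstar) (x i)) ^ 2 +
        2 * ((1 / (N : ℝ)) * ∑ i, (j fstar (x i) - y i) * j (h - fstar) (x i) -
          ∫ p, (j fstar p.1 - p.2) * j (h - fstar) p.1 ∂ν))
    -- (ii) : `|P_N M_{h-f*}| ≤ γ` on the intersection of the two balls
    (hii : ∀ h ∈ F, Ψ (h - fstar) ≤ ρ → l2 (h - fstar) ≤ r →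
      |(1 / (N : ℝ)) * ∑ i, (j fstar (x i) - y i) * j (h - fstar) (x i) -
        ∫ p, (j fstar p.1 - p.2) * j (h - fstar) p.1 ∂ν| ≤ γ)
    -- (iii) : the sparsity condition `Δ(ρ) ≥ 4ρ/5`, where the supremum runs over the
    -- collection `Γ_{f*}(ρ)` of functionals of dual norm one that are norming for some
    -- point of the `Ψ`-ball of radius `ρ/20` around `f*`
    (hiii : ∀ h ∈ F, Ψ (h - fstar) = ρ → l2 (h - fstar) ≤ r →
      4 * ρ / 5 ≤ sSup {c | ∃ z : E →ₗ[ℝ] ℝ,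
        (sSup {c' | ∃ a, Ψ a ≤ 1 ∧ c' = z a} = 1 ∧
          ∃ v, Ψ (v - fstar) ≤ ρ / 20 ∧ z v = Ψ v) ∧ c = z (h - fstar)})
    -- (iv) : the choice of the regularization parameter
    (hlam1 : 3 * γ / ρ ≤ lam) (hlam2 : lam < θ / 2 * r ^ 2 / ρ)
    -- `f̂` is a regularized empirical minimizer
    (fhat : E) (hfhatF : fhat ∈ F)
    (hmin : ∀ f ∈ F,
      (1 / (N : ℝ)) * ∑ i, (y i - j fhat (x i)) ^ 2 + lam * Ψ fhat ≤
      (1 / (N : ℝ)) * ∑ i, (y i - j f (x i)) ^ 2 + lam * Ψ f) :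
    Ψ (fhat - fstar) ≤ ρ ∧ l2 (fhat - fstar) ≤ r :=
  (stmt0_general j (Seminorm.of Ψ hΨ_add hΨ_smul) (hFconv.starConvex hfstarF) l2
    (fun h => ∫ p, (j fstar p.1 - p.2) * j h p.1 ∂ν) (fun f hf => (hvar f hf).2) x y
    hρ hr.le hθ.le hγ hi (fun h hF hρ hr => (abs_le.1 (hii h hF hρ.le hr)).1) hiii hlam1 hlam2
    hfhatF (hmin fstar hfstarF)).imp le_of_lt le_of_lt
end

section
/- Let t* ∈ ℝ^d, ρ > 0, r > 0, and suppose t* = v + u where ‖u‖₁ ≤ ρ/20 and v is supported on at most s coordinates with 100·s ≤ (ρ/r)². Then for every w ∈ ℝ^d with ‖w‖₁ = ρ and ‖w‖₂ ≤ r there exists z ∈ Γ_{t*}(ρ) with ⟨z, w⟩ ≥ 4ρ/5; that is, Δ(ρ) := inf{ sup_{z ∈ Γ_{t*}(ρ)} ⟨z, w⟩ : ‖w‖₁ = ρ, ‖w‖₂ ≤ r } ≥ 4ρ/5. -/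
/-- The `ℓ₁` norm on `ℝ^d`. -/
noncomputable def l1norm {d : ℕ} (t : Fin d → ℝ) : ℝ := ∑ i, |t i|

/-- The Euclidean (`ℓ₂`) norm on `ℝ^d`. -/
noncomputable def l2norm {d : ℕ} (t : Fin d → ℝ) : ℝ := Real.sqrt (∑ i, (t i) ^ 2)

/-- The `ℓ_∞` norm on `ℝ^d` (the dual norm of `ℓ₁`). -/
noncomputable def linfNorm {d : ℕ} (t : Fin d → ℝ) : ℝ := ⨆ i, |t i|

/-- The standard inner product on `ℝ^d`. -/
noncomputable def iprod {d : ℕ} (x y : Fin d → ℝ) : ℝ := ∑ i, x i * y i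

/-!
Let `J` be a set of at most `s` coordinates off which `v` vanishes. Choose `z` with entries `±1`
whose signs agree with those of `v` on `J` and with those of `w` off `J`. Then `z` norms `v`, which
lies in the ball around `t* = v + u`. On `J` the product `⟨z, w⟩` loses at most twice the `ℓ₁` mass
of `w` there, and by Cauchy–Schwarz this mass is at most `√s * r ≤ ρ / 10`.
-/

lemma exists_abs_eq_one_and_mul_eq_abs {ι : Type*} (x : ι → ℝ) :
    ∃ z : ι → ℝ, (∀ i, |z i| = 1) ∧ ∀ i, z i * x i = |x i| := by
  choose z hz hzx using fun i => RCLike.exists_norm_eq_mul_self (x i)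
  exact ⟨z, hz, fun i => (hzx i).symm⟩

section

variable {d : ℕ}

lemma nonempty_of_l1norm_pos {w : Fin d → ℝ} (hw : 0 < l1norm w) : Nonempty (Fin d) :=
  let ⟨i, _⟩ := Finset.exists_ne_zero_of_sum_ne_zero hw.ne'
  ⟨i⟩

lemma linfNorm_eq_one_of_forall_abs_eq_one [Nonempty (Fin d)] {z : Fin d → ℝ}
    (hz : ∀ i, |z i| = 1) : linfNorm z = 1 := by
  simp [linfNorm, hz]

lemma sum_abs_le_sqrt_card_mul_l2norm (J : Finset (Fin d)) (w : Fin d → ℝ) :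
    ∑ i ∈ J, |w i| ≤ √J.card * l2norm w :=
  calc ∑ i ∈ J, |w i|
      ≤ √(J.card * ∑ i ∈ J, |w i| ^ 2) := Real.le_sqrt_of_sq_le sq_sum_le_card_mul_sum_sq
    _ ≤ √(J.card * ∑ i, w i ^ 2) := by
        simp only [sq_abs]
        gcongr
        exact J.subset_univ
    _ = √J.card * l2norm w := Real.sqrt_mul (Nat.cast_nonneg _) _

lemma l1norm_sub_two_mul_sum_abs_le_iprod {J : Finset (Fin d)} {z w : Fin d → ℝ}
    (hz : ∀ i ∈ J, |z i| ≤ 1) (hzw : ∀ i ∉ J, z i * w i = |w i|) :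
    l1norm w - 2 * ∑ i ∈ J, |w i| ≤ iprod z w := by
  have bound_on : -∑ i ∈ J, |w i| ≤ ∑ i ∈ J, z i * w i := by
    rw [← Finset.sum_neg_distrib]
    refine Finset.sum_le_sum fun i hi => neg_le_of_abs_le ?_
    rw [abs_mul]
    exact mul_le_of_le_one_left (abs_nonneg _) (hz i hi)
  have eq_off : ∑ i ∈ Jᶜ, z i * w i = ∑ i ∈ Jᶜ, |w i| :=
    Finset.sum_congr rfl fun i hi => hzw i (Finset.mem_compl.mp hi)
  rw [l1norm, iprod, ← J.sum_add_sum_compl fun i => |w i|,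
    ← J.sum_add_sum_compl fun i => z i * w i, eq_off]
  linarith

lemma exists_iprod_eq_l1norm_and_l1norm_sub_le_iprod {J : Finset (Fin d)} {v : Fin d → ℝ}
    (hv : ∀ i ∉ J, v i = 0) (w : Fin d → ℝ) :
    ∃ z : Fin d → ℝ, (∀ i, |z i| = 1) ∧ iprod z v = l1norm v ∧
      l1norm w - 2 * (√J.card * l2norm w) ≤ iprod z w := by
  obtain ⟨z, hz, hzx⟩ := exists_abs_eq_one_and_mul_eq_abs (J.piecewise v w)
  have norms_v : ∀ i, z i * v i = |v i| := fun i => by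
    by_cases hi : i ∈ J
    · simpa only [J.piecewise_eq_of_mem v w hi] using hzx i
    · simp only [hv i hi, mul_zero, abs_zero]
  have norms_w : ∀ i ∉ J, z i * w i = |w i| := fun i hi => by
    simpa only [J.piecewise_eq_of_notMem v w hi] using hzx i
  refine ⟨z, hz, Finset.sum_congr rfl fun i _ => norms_v i, ?_⟩
  have hloss := l1norm_sub_two_mul_sum_abs_le_iprod (fun i _ => (hz i).le) norms_w
  linarith [sum_abs_le_sqrt_card_mul_l2norm J w]

end

/-- Lemma 4.2, the LASSO sparsity equation: if `t* = v + u` with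
`‖u‖₁ ≤ ρ/20`, `v` supported on at most `s` coordinates and `100 s ≤ (ρ/r)²`, then for
every `w` with `‖w‖₁ = ρ` and `‖w‖₂ ≤ r` there is `z ∈ Γ_{t*}(ρ)` (i.e. `‖z‖_∞ = 1` and
`z` is norming for some point of the `ℓ₁`-ball of radius `ρ/20` around `t*`) with
`⟨z, w⟩ ≥ 4ρ/5`; that is, `Δ(ρ) ≥ 4ρ/5`. -/
theorem stmt2 (d s : ℕ) (tstar v u : Fin d → ℝ) (ρ r : ℝ) (hρ : 0 < ρ) (hr : 0 < r)
    (hdec : tstar = v + u) (hu : l1norm u ≤ ρ / 20)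
    (hsupp : ∃ J : Finset (Fin d), J.card ≤ s ∧ ∀ i ∉ J, v i = 0)
    (hs : 100 * (s : ℝ) ≤ (ρ / r) ^ 2) :
    ∀ w : Fin d → ℝ, l1norm w = ρ → l2norm w ≤ r →
      ∃ z : Fin d → ℝ,
        (linfNorm z = 1 ∧
          ∃ v' : Fin d → ℝ, l1norm (v' - tstar) ≤ ρ / 20 ∧ iprod z v' = l1norm v') ∧
        4 * ρ / 5 ≤ iprod z w := by
  intro w hw1 hw2
  obtain ⟨J, hJs, hJ⟩ := hsupp
  have : Nonempty (Fin d) := nonempty_of_l1norm_pos (hw1 ▸ hρ)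
  obtain ⟨z, hz, hzv, hzw⟩ := exists_iprod_eq_l1norm_and_l1norm_sub_le_iprod hJ w
  have hball : l1norm (v - tstar) ≤ ρ / 20 := by
    simpa [l1norm, hdec] using hu
  have hsqrt : √s ≤ ρ / 10 / r := by
    refine Real.sqrt_le_iff.mpr ⟨by positivity, ?_⟩
    rw [div_right_comm, div_pow]
    linarith
  have hmass : √J.card * l2norm w ≤ ρ / 10 :=
    calc √J.card * l2norm w ≤ √J.card * r := by gcongr
      _ ≤ √s * r := by gcongr
      _ ≤ ρ / 10 := (le_div_iff₀ hr).mp hsqrt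
  exact ⟨z, ⟨linfNorm_eq_one_of_forall_abs_eq_one hz, v, hball, hzv⟩, by linarith⟩
end

section
/- Let Ψ be the SLOPE norm with weights β₁ ≥ β₂ ≥ … ≥ β_d > 0, let 1 ≤ s ≤ d and set B_s = ∑_{i ≤ s} β_i/√i. Let t* ∈ ℝ^d, ρ > 0, r > 0, and suppose t* = v + u where Ψ(u) ≤ ρ/20, v is supported on at most s coordinates, and 40·B_s ≤ ρ/r. Then for every w ∈ ℝ^d with Ψ(w) = ρ and ‖w‖₂ ≤ r there exists z ∈ Γ_{t*}(ρ) with ⟨z, w⟩ ≥ 4ρ/5; that is, Δ(ρ) := inf{ sup_{z ∈ Γ_{t*}(ρ)} ⟨z, w⟩ : Ψ(w) = ρ, ‖w‖₂ ≤ r } ≥ 4ρ/5. -/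
/-- The nonincreasing rearrangement of `(|t_i|)_{i=1}^d`. -/
noncomputable def sharpOrd {d : ℕ} (t : Fin d → ℝ) : Fin d → ℝ :=
  fun i => |t (Tuple.sort (fun j => |t j|) i.rev)|

/-- The SLOPE norm `Ψ(t) = ∑ β_i t_i^♯` associated with weights `β`. -/
noncomputable def slopeNorm {d : ℕ} (β t : Fin d → ℝ) : ℝ := ∑ i, β i * sharpOrd t i

/-- The dual norm of the SLOPE norm. -/
noncomputable def slopeDualNorm {d : ℕ} (β z : Fin d → ℝ) : ℝ :=
  sSup {c | ∃ w : Fin d → ℝ, slopeNorm β w ≤ 1 ∧ c = iprod z w}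

/-!
Let `π` list the coordinates by decreasing `|v|`, breaking ties by decreasing `|w|`, and let `e`
carry the signs of `v`, and those of `w` where `v` vanishes. Placing the weight `β i` with sign
`e (π i)` on the coordinate `π i` gives a `z` of dual norm one with `⟨z, v⟩ = Ψ(v)`. The nonzero
entries of `v` occupy at most the first `s` ranks. On the later ranks `z` collects at least
`∑_{i > s} β_i w_i^♯`; on the first `s` it loses at most `∑_{i ≤ s} β_i w_i^♯`. Since
`w_i^♯ ≤ ‖w‖₂ / √i`, this gives `⟨z, w⟩ ≥ Ψ(w) - 2 B_s ‖w‖₂`.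
-/

section

variable {d : ℕ}

/-- The permutation listing the indices of `f` by decreasing value, used both for the rearrangement
`t^♯` and for the lexicographic order on pairs `(|v_j|, |w_j|)`. -/
def antitoneSort {α : Type*} [LinearOrder α] (f : Fin d → α) : Equiv.Perm (Fin d) :=
  Fin.revPerm.trans (Tuple.sort f)

theorem antitone_comp_antitoneSort {α : Type*} [LinearOrder α] (f : Fin d → α) :
    Antitone (f ∘ antitoneSort f) := fun _ _ hij =>
  Tuple.monotone_sort f (Fin.rev_le_rev.2 hij)

theorem exists_perm_antitone_lex {α γ : Type*} [LinearOrder α] [LinearOrder γ]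
    (f : Fin d → α) (g : Fin d → γ) :
    ∃ π : Equiv.Perm (Fin d), Antitone (f ∘ π) ∧
      ∀ i m, i ≤ m → f (π m) = f (π i) → g (π m) ≤ g (π i) := by
  let key : Fin d → α ×ₗ γ := fun j => toLex (f j, g j)
  have hkey := antitone_comp_antitoneSort key
  refine ⟨antitoneSort key, fun i m him => Prod.Lex.monotone_fst _ _ (hkey him),
    fun i m him heq => ?_⟩
  rcases Prod.Lex.toLex_le_toLex.1 (hkey him) with hlt | ⟨-, hle⟩
  · exact absurd heq hlt.ne
  · exact hle

theorem exists_le_apply_notMem_of_card_le {J : Finset (Fin d)} {i : Fin d} (hi : J.card ≤ i)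
    (π : Equiv.Perm (Fin d)) : ∃ m ≤ i, π m ∉ J := by
  have hcard : J.card < ((Finset.Iic i).map π.toEmbedding).card := by
    rw [Finset.card_map, Fin.card_Iic]
    exact Nat.lt_succ_of_le hi
  obtain ⟨j, hj, hjJ⟩ := Finset.exists_mem_notMem_of_card_lt_card hcard
  obtain ⟨m, hm, rfl⟩ := Finset.mem_map.1 hj
  exact ⟨m, Finset.mem_Iic.1 hm, hjJ⟩

theorem apply_perm_eq_zero_of_card_le {v : Fin d → ℝ} {J : Finset (Fin d)}
    (hJ : ∀ j ∉ J, v j = 0) {π : Equiv.Perm (Fin d)} (hπ : Antitone fun i => |v (π i)|)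
    {i : Fin d} (hi : J.card ≤ i) : v (π i) = 0 := by
  obtain ⟨m, hmi, hm⟩ := exists_le_apply_notMem_of_card_le hi π
  simpa only [hJ _ hm, abs_zero, abs_nonpos_iff] using hπ hmi

theorem sharpOrd_antitone (t : Fin d → ℝ) : Antitone (sharpOrd t) :=
  antitone_comp_antitoneSort fun j => |t j|

theorem sharpOrd_nonneg (t : Fin d → ℝ) (i : Fin d) : 0 ≤ sharpOrd t i := abs_nonneg _

theorem sharpOrd_eq_of_antitone {t : Fin d → ℝ} {π : Equiv.Perm (Fin d)}
    (hπ : Antitone fun i => |t (π i)|) (i : Fin d) : sharpOrd t i = |t (π i)| := by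
  have hmono : Monotone ((fun j => |t j|) ∘ Fin.revPerm.trans π) := fun _ _ hij =>
    hπ (Fin.rev_le_rev.2 hij)
  have hsort := congrFun (Tuple.comp_sort_eq_comp_iff_monotone.2 hmono) i.rev
  simpa [sharpOrd] using hsort.symm

theorem sharpOrd_le_of_forall_ge {t : Fin d → ℝ} {π : Equiv.Perm (Fin d)} {i : Fin d} {c : ℝ}
    (hc : ∀ m, i ≤ m → |t (π m)| ≤ c) : sharpOrd t i ≤ c := by
  let σ := antitoneSort fun j => |t j|
  have hcard : ((Finset.Iio i).map π.toEmbedding).card ≤ i := by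
    rw [Finset.card_map, Fin.card_Iio]
  obtain ⟨m, hmi, hm⟩ := exists_le_apply_notMem_of_card_le hcard σ
  have hrank : i ≤ π.symm (σ m) := by simpa using hm
  calc sharpOrd t i ≤ sharpOrd t m := sharpOrd_antitone t hmi
    _ = |t (π (π.symm (σ m)))| := by rw [Equiv.apply_symm_apply]; rfl
    _ ≤ c := hc _ hrank

theorem sum_sharpOrd_sq (t : Fin d → ℝ) : ∑ i, sharpOrd t i ^ 2 = ∑ j, t j ^ 2 := by
  simpa [sharpOrd, antitoneSort] using
    Equiv.sum_comp (antitoneSort fun j => |t j|) fun j => t j ^ 2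

theorem sharpOrd_le_l2norm_div_sqrt (t : Fin d → ℝ) (i : Fin d) :
    sharpOrd t i ≤ l2norm t / √((i : ℕ) + 1) := by
  have hpos : (0 : ℝ) < (i : ℕ) + 1 := by positivity
  rw [le_div_iff₀ (Real.sqrt_pos.2 hpos)]
  apply Real.le_sqrt_of_sq_le
  rw [mul_pow, Real.sq_sqrt hpos.le]
  calc sharpOrd t i ^ 2 * ((i : ℕ) + 1) = ∑ _m ∈ Finset.Iic i, sharpOrd t i ^ 2 := by
        simp [Fin.card_Iic, mul_comm]
    _ ≤ ∑ m ∈ Finset.Iic i, sharpOrd t m ^ 2 := Finset.sum_le_sum fun m hm =>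
        pow_le_pow_left₀ (sharpOrd_nonneg t i) (sharpOrd_antitone t (Finset.mem_Iic.1 hm)) 2
    _ ≤ ∑ m, sharpOrd t m ^ 2 := Finset.sum_le_univ_sum_of_nonneg fun _ => sq_nonneg _
    _ = ∑ j, t j ^ 2 := sum_sharpOrd_sq t

theorem slopeNorm_neg (β t : Fin d → ℝ) : slopeNorm β (-t) = slopeNorm β t := by
  simp only [slopeNorm, sharpOrd, Pi.neg_apply, abs_neg]

theorem sum_mul_abs_comp_perm_le_slopeNorm {β : Fin d → ℝ} (hβ : Antitone β) (t : Fin d → ℝ)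
    (π : Equiv.Perm (Fin d)) : ∑ i, β i * |t (π i)| ≤ slopeNorm β t := by
  have h := (hβ.monovary (sharpOrd_antitone t)).sum_mul_comp_perm_le_sum_mul
    (σ := π.trans (antitoneSort fun j => |t j|).symm)
  simpa [slopeNorm, sharpOrd, antitoneSort] using h

theorem slopeNorm_le_sum_div_sqrt_mul_l2norm {β : Fin d → ℝ} (hβ : 0 ≤ β) (t : Fin d → ℝ) :
    slopeNorm β t ≤ (∑ i, β i / √((i : ℕ) + 1)) * l2norm t := by
  rw [slopeNorm, Finset.sum_mul]
  refine Finset.sum_le_sum fun i _ => ?_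
  rw [div_mul_eq_mul_div, mul_div_assoc]
  exact mul_le_mul_of_nonneg_left (sharpOrd_le_l2norm_div_sqrt t i) (hβ i)

/-- The weights `β` with all but the first `s` entries replaced by zero, so that
`∑_{i ≤ s} β_i t_i^♯` is again a SLOPE norm of `t`. -/
def headWeights (β : Fin d → ℝ) (s : ℕ) : Fin d → ℝ := fun i => if (i : ℕ) < s then β i else 0

theorem headWeights_nonneg {β : Fin d → ℝ} (hβ : 0 ≤ β) (s : ℕ) : 0 ≤ headWeights β s := by
  intro i
  unfold headWeights
  split_ifs
  exacts [hβ i, le_rfl]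

theorem headWeights_antitone {β : Fin d → ℝ} (hβ : Antitone β) (hβ0 : 0 ≤ β) (s : ℕ) :
    Antitone (headWeights β s) := by
  intro i m him
  by_cases hm : (m : ℕ) < s
  · have hi : (i : ℕ) < s := lt_of_le_of_lt him hm
    simpa only [headWeights, hm, hi, if_true] using hβ him
  · calc headWeights β s m = 0 := if_neg hm
      _ ≤ headWeights β s i := headWeights_nonneg hβ0 s i

theorem slopeNorm_headWeights_le {β : Fin d → ℝ} (hβ : 0 ≤ β) (s : ℕ) {t : Fin d → ℝ} {r : ℝ}
    (ht : l2norm t ≤ r) :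
    slopeNorm (headWeights β s) t ≤
      (∑ i ∈ Finset.univ.filter (fun i : Fin d => (i : ℕ) < s), β i / √((i : ℕ) + 1)) * r := by
  have hγ := headWeights_nonneg hβ s
  calc slopeNorm (headWeights β s) t
      ≤ (∑ i, headWeights β s i / √((i : ℕ) + 1)) * l2norm t :=
        slopeNorm_le_sum_div_sqrt_mul_l2norm hγ t
    _ ≤ (∑ i, headWeights β s i / √((i : ℕ) + 1)) * r :=
        mul_le_mul_of_nonneg_left ht
          (Finset.sum_nonneg fun i _ => div_nonneg (hγ i) (Real.sqrt_nonneg _))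
    _ = _ := by simp only [headWeights, ite_div, zero_div, Finset.sum_filter]

/-- The vector with `β i * e (π i)` at the coordinate `π i`; for signs `e` these are the extreme
points of the dual SLOPE ball. Here `π` maps ranks to coordinates. -/
def slopeDualVertex (β : Fin d → ℝ) (π : Equiv.Perm (Fin d)) (e : Fin d → ℝ) : Fin d → ℝ :=
  fun j => β (π.symm j) * e j

theorem iprod_slopeDualVertex (β : Fin d → ℝ) (π : Equiv.Perm (Fin d)) (e t : Fin d → ℝ) :
    iprod (slopeDualVertex β π e) t = ∑ i, β i * (e (π i) * t (π i)) := by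
  rw [iprod, ← Equiv.sum_comp π]
  simp [slopeDualVertex, mul_assoc]

theorem iprod_slopeDualVertex_le_slopeNorm {β : Fin d → ℝ} (hβ : Antitone β) (hβ0 : 0 ≤ β)
    (π : Equiv.Perm (Fin d)) {e : Fin d → ℝ} (he : ∀ j, |e j| = 1) (t : Fin d → ℝ) :
    iprod (slopeDualVertex β π e) t ≤ slopeNorm β t := by
  rw [iprod_slopeDualVertex]
  refine le_trans (Finset.sum_le_sum fun i _ => mul_le_mul_of_nonneg_left ?_ (hβ0 i))
    (sum_mul_abs_comp_perm_le_slopeNorm hβ t π)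
  calc e (π i) * t (π i) ≤ |e (π i) * t (π i)| := le_abs_self _
    _ = |t (π i)| := by rw [abs_mul, he, one_mul]

theorem iprod_slopeDualVertex_eq_slopeNorm (β : Fin d → ℝ) {π : Equiv.Perm (Fin d)}
    {e t : Fin d → ℝ} (hπ : Antitone fun i => |t (π i)|) (he : ∀ j, e j * t j = |t j|) :
    iprod (slopeDualVertex β π e) t = slopeNorm β t := by
  simp only [iprod_slopeDualVertex, slopeNorm, he, sharpOrd_eq_of_antitone hπ]

theorem slopeDualNorm_slopeDualVertex {β : Fin d → ℝ} (hβ : Antitone β) (hβpos : 0 < β)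
    (π : Equiv.Perm (Fin d)) {e : Fin d → ℝ} (he : ∀ j, |e j| = 1) :
    slopeDualNorm β (slopeDualVertex β π e) = 1 := by
  have hS : 0 < ∑ i, β i := Fintype.sum_pos hβpos
  let t : Fin d → ℝ := fun j => e j * (∑ i, β i)⁻¹
  have habs : ∀ j, |t j| = (∑ i, β i)⁻¹ := fun j => by
    rw [abs_mul, he, one_mul, abs_of_pos (inv_pos.2 hS)]
  have hnorm : slopeNorm β t = 1 := by
    simp only [slopeNorm, sharpOrd, habs, ← Finset.sum_mul, mul_inv_cancel₀ hS.ne']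
  have hattained : iprod (slopeDualVertex β π e) t = 1 := by
    rw [← hnorm]
    refine iprod_slopeDualVertex_eq_slopeNorm β (fun i m _ => by simp only [habs, le_refl])
      fun j => ?_
    rw [habs, ← mul_assoc, ← abs_mul_abs_self, he, one_mul, one_mul]
  refine IsGreatest.csSup_eq ⟨⟨t, hnorm.le, hattained.symm⟩, ?_⟩
  rintro c ⟨w, hw, rfl⟩
  exact (iprod_slopeDualVertex_le_slopeNorm hβ hβpos.le π he w).trans hw

theorem slopeNorm_sub_two_mul_le_iprod_slopeDualVertex {β : Fin d → ℝ} (hβ : Antitone β)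
    (hβ0 : 0 ≤ β) {s : ℕ} {π : Equiv.Perm (Fin d)} {e w : Fin d → ℝ} (he : ∀ j, |e j| = 1)
    (htail : ∀ i : Fin d, s ≤ i → sharpOrd w i ≤ e (π i) * w (π i)) :
    slopeNorm β w - 2 * slopeNorm (headWeights β s) w ≤ iprod (slopeDualVertex β π e) w := by
  have hterm : ∀ i, β i * sharpOrd w i -
      headWeights β s i * sharpOrd w i - headWeights β s i * |w (π i)| ≤
        β i * (e (π i) * w (π i)) := by
    intro i
    by_cases hi : (i : ℕ) < s
    · have hsign : -|w (π i)| ≤ e (π i) * w (π i) := by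
        simpa only [abs_mul, he, one_mul] using neg_abs_le (e (π i) * w (π i))
      simpa [headWeights, hi] using mul_le_mul_of_nonneg_left hsign (hβ0 i)
    · simpa [headWeights, hi] using mul_le_mul_of_nonneg_left (htail i (not_lt.1 hi)) (hβ0 i)
  have hsum := Finset.sum_le_sum fun i (_ : i ∈ Finset.univ) => hterm i
  simp only [Finset.sum_sub_distrib, ← iprod_slopeDualVertex] at hsum
  have hhead := sum_mul_abs_comp_perm_le_slopeNorm (headWeights_antitone hβ hβ0 s) w π
  unfold slopeNorm at hhead ⊢
  linarith

theorem exists_sign_mul_eq_abs_lex {R : Type*} [Ring R] [LinearOrder R] [IsOrderedRing R]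
    (x y : R) : ∃ e : R, |e| = 1 ∧ e * x = |x| ∧ (x = 0 → e * y = |y|) := by
  have hsign : ∀ z : R, ∃ e : R, |e| = 1 ∧ e * z = |z| := fun z => by
    rcases abs_choice z with h | h
    · exact ⟨1, abs_one, by rw [one_mul, h]⟩
    · exact ⟨-1, by rw [abs_neg, abs_one], by rw [neg_one_mul, h]⟩
  by_cases hx : x = 0
  · obtain ⟨e, he, hey⟩ := hsign y
    exact ⟨e, he, by rw [hx, mul_zero, abs_zero], fun _ => hey⟩
  · obtain ⟨e, he, hex⟩ := hsign x
    exact ⟨e, he, hex, fun h => absurd h hx⟩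

/-- The vectors of dual norm one that attain the SLOPE norm of some point within SLOPE distance `ε`
of `t`; the set `Γ_t(ρ)` is the case `ε = ρ / 20`. -/
def slopeNormingSet (β t : Fin d → ℝ) (ε : ℝ) : Set (Fin d → ℝ) :=
  {z | slopeDualNorm β z = 1 ∧
    ∃ v : Fin d → ℝ, slopeNorm β (v - t) ≤ ε ∧ iprod z v = slopeNorm β v}

theorem stmt3_general {β : Fin d → ℝ} (hβ : Antitone β) (hβpos : 0 < β)
    {t v : Fin d → ℝ} {ε : ℝ} (hv : slopeNorm β (v - t) ≤ ε)
    {s : ℕ} (hsupp : ∃ J : Finset (Fin d), J.card ≤ s ∧ ∀ j ∉ J, v j = 0)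
    {w : Fin d → ℝ} {r : ℝ} (hw : l2norm w ≤ r) :
    ∃ z ∈ slopeNormingSet β t ε, slopeNorm β w -
      2 * ((∑ i ∈ Finset.univ.filter (fun i : Fin d => (i : ℕ) < s), β i / √((i : ℕ) + 1)) * r) ≤
        iprod z w := by
  obtain ⟨J, hJs, hJ⟩ := hsupp
  obtain ⟨π, hπv, hπw⟩ := exists_perm_antitone_lex (fun j => |v j|) (fun j => |w j|)
  choose e he hev hew using fun j => exists_sign_mul_eq_abs_lex (v j) (w j)
  have hzero : ∀ i : Fin d, s ≤ i → v (π i) = 0 := fun i hi =>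
    apply_perm_eq_zero_of_card_le hJ hπv (hJs.trans hi)
  have htail : ∀ i : Fin d, s ≤ i → sharpOrd w i ≤ e (π i) * w (π i) := by
    intro i hi
    rw [hew _ (hzero i hi)]
    refine sharpOrd_le_of_forall_ge fun m him => hπw i m him ?_
    simp only [hzero i hi, hzero m (hi.trans him)]
  refine ⟨slopeDualVertex β π e, ⟨slopeDualNorm_slopeDualVertex hβ hβpos π he, v, hv,
    iprod_slopeDualVertex_eq_slopeNorm β hπv hev⟩, ?_⟩
  have hcert := slopeNorm_sub_two_mul_le_iprod_slopeDualVertex hβ hβpos.le he htail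
  have hhead := slopeNorm_headWeights_le hβpos.le s hw
  linarith

end

/-- Lemma 4.3, the SLOPE sparsity equation: with nonincreasing positive
weights `β`, `B_s = ∑_{i ≤ s} β_i/√i`, if `t* = v + u` with `Ψ(u) ≤ ρ/20`, `v` supported
on at most `s` coordinates, and `40 B_s ≤ ρ/r`, then for every `w` with `Ψ(w) = ρ` and
`‖w‖₂ ≤ r` there exists `z ∈ Γ_{t*}(ρ)` with `⟨z, w⟩ ≥ 4ρ/5`; that is, `Δ(ρ) ≥ 4ρ/5`. -/
theorem stmt3 (d s : ℕ) (hs1 : 1 ≤ s) (hsd : s ≤ d)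
    (β : Fin d → ℝ) (hβmono : Antitone β) (hβpos : ∀ i, 0 < β i)
    (Bs : ℝ)
    (hBs : Bs = ∑ i ∈ Finset.univ.filter (fun i : Fin d => (i : ℕ) < s),
      β i / Real.sqrt ((i : ℕ) + 1))
    (tstar v u : Fin d → ℝ) (ρ r : ℝ) (hρ : 0 < ρ) (hr : 0 < r)
    (hdec : tstar = v + u) (hu : slopeNorm β u ≤ ρ / 20)
    (hsupp : ∃ J : Finset (Fin d), J.card ≤ s ∧ ∀ i ∉ J, v i = 0)
    (hratio : 40 * Bs ≤ ρ / r) :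
    ∀ w : Fin d → ℝ, slopeNorm β w = ρ → l2norm w ≤ r →
      ∃ z : Fin d → ℝ,
        (slopeDualNorm β z = 1 ∧
          ∃ v' : Fin d → ℝ, slopeNorm β (v' - tstar) ≤ ρ / 20 ∧
            iprod z v' = slopeNorm β v') ∧
        4 * ρ / 5 ≤ iprod z w := by
  intro w hw hwr
  have hβ : 0 < β := Pi.lt_def.2 ⟨fun i => (hβpos i).le, ⟨0, hs1.trans hsd⟩, hβpos _⟩
  have hv : slopeNorm β (v - tstar) ≤ ρ / 20 := by
    rwa [hdec, sub_add_cancel_left, slopeNorm_neg]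
  have hBr : 40 * Bs * r ≤ ρ := (le_div_iff₀ hr).1 hratio
  obtain ⟨z, hz, hzw⟩ := stmt3_general hβmono hβ hv hsupp hwr
  rw [hw, ← hBs] at hzw
  exact ⟨z, hz, by linarith⟩
end

section
/- Let g₁, …, g_d be independent standard Gaussian random variables and let (g_i^♯)_{i=1}^d be the nonincreasing rearrangement of (|g_i|)_{i=1}^d. Then for every i ∈ {1, …, d} and every t ≥ 3, Pr( g_i^♯ ≥ t·√(log(ed/i)) ) ≤ exp( −(t²/4)·i·log(ed/i) ). Moreover, there is an absolute constant c > 0 such that E (g_i^♯)² ≤ c·log(ed/i) for every i ∈ {1, …, d}. -/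
open MeasureTheory ProbabilityTheory

/-
If the `k`-th largest of `|g₁|, …, |g_d|` is at least `s`, then some `k` coordinates are at least
`s` in absolute value. A union bound over the `(d choose k) ≤ (ed/k)^k` choices, independence and
the sub-Gaussian tail `P(|g_j| ≥ s) ≤ 2 exp(-s²/2)` give the tail estimate; the factors `(ed/k)^k`
and `2^k` are absorbed because `log(ed/k) ≥ 1` and `t ≥ 3`.

For the second moment, monotonicity gives `k exp((g_k^♯)²/4) ≤ ∑ exp(g_j²/4)`, and
`y ≤ L + exp(y - L)` with `L = log(ed/k)` turns this into a bound on `(g_k^♯)²` itself, whose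
expectation is controlled by `𝔼 exp(g_j²/4) ≤ √2`.
-/

section Arithmetic

lemma choose_le_exp_one_mul_div_pow (n k : ℕ) :
    (n.choose k : ℝ) ≤ (Real.exp 1 * n / k) ^ k := by
  rcases Nat.eq_zero_or_pos k with rfl | hk
  · simp
  have hk' : (0 : ℝ) < k := Nat.cast_pos.2 hk
  have hfac : (k : ℝ) ^ k / k.factorial ≤ Real.exp 1 ^ k := by
    rw [← Real.exp_nat_mul, mul_one]
    exact Real.pow_div_factorial_le_exp _ hk'.le _
  calc (n.choose k : ℝ) ≤ (n : ℝ) ^ k / k.factorial := Nat.choose_le_pow_div k n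
    _ = ((k : ℝ) ^ k / k.factorial) * (n / k) ^ k := by
        rw [div_pow]; field_simp
    _ ≤ Real.exp 1 ^ k * (n / k) ^ k := by gcongr
    _ = (Real.exp 1 * n / k) ^ k := by rw [← mul_pow, mul_div_assoc]

lemma one_le_log_exp_one_mul_div {a b : ℝ} (ha : 0 < a) (hab : a ≤ b) :
    1 ≤ Real.log (Real.exp 1 * b / a) := by
  have hb : 0 < b := ha.trans_le hab
  rw [Real.le_log_iff_exp_le (by positivity), mul_div_assoc]
  exact le_mul_of_one_le_right (Real.exp_pos 1).le ((one_le_div ha).2 hab)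

lemma one_le_log_exp_one_mul_div_succ {d : ℕ} (i : Fin d) :
    1 ≤ Real.log (Real.exp 1 * (d : ℝ) / ((i : ℕ) + 1)) :=
  one_le_log_exp_one_mul_div (by positivity) (by exact_mod_cast i.isLt)

lemma choose_mul_two_mul_exp_pow_le {n k : ℕ} (hk : 0 < k) (hkn : k ≤ n) {t : ℝ} (ht : 3 ≤ t) :
    (n.choose k : ℝ) * (2 * Real.exp (-(t ^ 2 / 2) * Real.log (Real.exp 1 * n / k))) ^ k ≤
      Real.exp (-(t ^ 2 / 4) * k * Real.log (Real.exp 1 * n / k)) := by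
  have hk' : (0 : ℝ) < k := Nat.cast_pos.2 hk
  have hL : 1 ≤ Real.log (Real.exp 1 * n / k) :=
    one_le_log_exp_one_mul_div hk' (Nat.cast_le.2 hkn)
  have hn : (0 : ℝ) < n := hk'.trans_le (Nat.cast_le.2 hkn)
  have hchoose := choose_le_exp_one_mul_div_pow n k
  rw [← Real.exp_log (show 0 < Real.exp 1 * n / k by positivity)] at hchoose
  set L := Real.log (Real.exp 1 * n / k)
  have htwo : (2 : ℝ) ≤ Real.exp 1 := by linarith [Real.add_one_le_exp (1 : ℝ)]
  have hexponent : L + 1 - t ^ 2 / 2 * L ≤ -(t ^ 2 / 4) * L := by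
    nlinarith [show (9 : ℝ) ≤ t ^ 2 by nlinarith]
  calc (n.choose k : ℝ) * (2 * Real.exp (-(t ^ 2 / 2) * L)) ^ k
      ≤ Real.exp L ^ k * (Real.exp 1 * Real.exp (-(t ^ 2 / 2) * L)) ^ k := by gcongr
    _ = Real.exp (L + 1 - t ^ 2 / 2 * L) ^ k := by
        rw [← mul_pow, ← Real.exp_add, ← Real.exp_add]
        ring_nf
    _ ≤ Real.exp (-(t ^ 2 / 4) * L) ^ k := by gcongr
    _ = Real.exp (-(t ^ 2 / 4) * k * L) := by
        rw [← Real.exp_nat_mul]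
        ring_nf

end Arithmetic

section SharpOrd

variable {d : ℕ} (x : Fin d → ℝ) (i : Fin d)

lemma sharpOrd_nonneg_s14 : 0 ≤ sharpOrd x i :=
  abs_nonneg _

lemma exists_card_eq_forall_sharpOrd_le_abs :
    ∃ S : Finset (Fin d), S.card = (i : ℕ) + 1 ∧ ∀ j ∈ S, sharpOrd x i ≤ |x j| := by
  refine ⟨(Finset.Ici i.rev).map (Tuple.sort fun j => |x j|).toEmbedding, ?_, ?_⟩
  · rw [Finset.card_map, Fin.card_Ici, Fin.val_rev]
    have := i.isLt
    omega
  · intro j hj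
    obtain ⟨m, hm, rfl⟩ := Finset.mem_map.1 hj
    exact Tuple.monotone_sort (fun j => |x j|) (Finset.mem_Ici.1 hm)

lemma succ_mul_apply_sharpOrd_le_sum {f : ℝ → ℝ} (hf : MonotoneOn f (Set.Ici 0))
    (hf₀ : 0 ≤ f 0) : ((i : ℕ) + 1) * f (sharpOrd x i) ≤ ∑ j, f |x j| := by
  obtain ⟨S, hcard, hS⟩ := exists_card_eq_forall_sharpOrd_le_abs x i
  have hf_abs (y : ℝ) : 0 ≤ f |y| :=
    hf₀.trans (hf Set.self_mem_Ici (abs_nonneg y) (abs_nonneg y))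
  calc ((i : ℕ) + 1) * f (sharpOrd x i) = ∑ _j ∈ S, f (sharpOrd x i) := by simp [hcard]
    _ ≤ ∑ j ∈ S, f |x j| :=
        Finset.sum_le_sum fun j hj => hf (sharpOrd_nonneg_s14 x i) (abs_nonneg (x j)) (hS j hj)
    _ ≤ ∑ j, f |x j| :=
        Finset.sum_le_sum_of_subset_of_nonneg S.subset_univ fun j _ _ => hf_abs (x j)

lemma mul_sharpOrd_sq_le_log_add_sum_exp {a : ℝ} (ha : 0 ≤ a) :
    a * sharpOrd x i ^ 2 ≤ Real.log (Real.exp 1 * (d : ℝ) / ((i : ℕ) + 1)) +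
      (d : ℝ)⁻¹ * ∑ j, Real.exp (a * x j ^ 2) := by
  have hd : (0 : ℝ) < d := by exact_mod_cast i.pos
  have hmono : MonotoneOn (fun y : ℝ => Real.exp (a * y ^ 2)) (Set.Ici 0) := by
    intro y (hy : 0 ≤ y) z _ hyz
    dsimp only
    gcongr
  have hsum := succ_mul_apply_sharpOrd_le_sum x i hmono (Real.exp_pos _).le
  simp only [sq_abs] at hsum
  set L := Real.log (Real.exp 1 * (d : ℝ) / ((i : ℕ) + 1)) with hL
  have hexp : Real.exp (a * sharpOrd x i ^ 2 - L) ≤ (d : ℝ)⁻¹ * ∑ j, Real.exp (a * x j ^ 2) :=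
    calc Real.exp (a * sharpOrd x i ^ 2 - L)
        = (Real.exp 1)⁻¹ * ((d : ℝ)⁻¹ *
            (((i : ℕ) + 1) * Real.exp (a * sharpOrd x i ^ 2))) := by
          rw [Real.exp_sub, hL, Real.exp_log (by positivity)]
          field_simp
      _ ≤ 1 * ((d : ℝ)⁻¹ * ∑ j, Real.exp (a * x j ^ 2)) := by
          gcongr
          exact inv_le_one_of_one_le₀ (Real.one_le_exp zero_le_one)
      _ = (d : ℝ)⁻¹ * ∑ j, Real.exp (a * x j ^ 2) := one_mul _
  linarith [Real.add_one_le_exp (a * sharpOrd x i ^ 2 - L)]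

end SharpOrd

lemma lintegral_exp_mul_sq_gaussianReal {b : ℝ} (hb : 2 * b < 1) :
    ∫⁻ y, ENNReal.ofReal (Real.exp (b * y ^ 2)) ∂gaussianReal 0 1 =
      ENNReal.ofReal (√(1 - 2 * b))⁻¹ := by
  have hval : ∫ y, Real.exp (b * y ^ 2) ∂gaussianReal 0 1 = (√(1 - 2 * b))⁻¹ := by
    have hdensity (y : ℝ) : gaussianPDFReal 0 1 y • Real.exp (b * y ^ 2) =
        (√(2 * Real.pi))⁻¹ * Real.exp (-(1 / 2 - b) * y ^ 2) := by
      simp only [gaussianPDFReal, NNReal.coe_one, mul_one, sub_zero, smul_eq_mul]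
      rw [mul_assoc, ← Real.exp_add]
      ring_nf
    rw [integral_gaussianReal_eq_integral_smul one_ne_zero]
    simp_rw [hdensity]
    rw [integral_const_mul, integral_gaussian, ← Real.sqrt_inv, ← Real.sqrt_inv,
      ← Real.sqrt_mul (by positivity)]
    congr 1
    have : 1 - 2 * b ≠ 0 := by linarith
    have : 1 / 2 - b ≠ 0 := by linarith
    field_simp
  have hint : Integrable (fun y => Real.exp (b * y ^ 2)) (gaussianReal 0 1) := by
    refine Integrable.of_integral_ne_zero ?_
    rw [hval]
    have : 0 < 1 - 2 * b := by linarith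
    positivity
  rw [← hval, ofReal_integral_eq_lintegral_ofReal hint (ae_of_all _ fun y => (Real.exp_pos _).le)]

section Subgaussian

variable {Ω : Type*} {mΩ : MeasurableSpace Ω} {μ : Measure Ω} [IsFiniteMeasure μ]
  {X : Ω → ℝ} {c : NNReal}

lemma measure_le_abs_le_of_hasSubgaussianMGF (hX : HasSubgaussianMGF X c μ) {s : ℝ}
    (hs : 0 ≤ s) :
    μ {ω | s ≤ |X ω|} ≤ ENNReal.ofReal (2 * Real.exp (-s ^ 2 / (2 * c))) := by
  have hunion : {ω | s ≤ |X ω|} = {ω | s ≤ X ω} ∪ {ω | s ≤ (-X) ω} := by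
    ext ω
    exact le_abs (a := s) (b := X ω)
  rw [← ofReal_measureReal, hunion, two_mul]
  exact ENNReal.ofReal_le_ofReal ((measureReal_union_le _ _).trans
    (add_le_add (hX.measure_ge_le hs) (hX.neg.measure_ge_le hs)))

-- Gaussian linearization: `exp (a x²)` is the mgf of a standard Gaussian at `√(2a) x`, so Tonelli
-- replaces the square in the exponent by the mgf of `X`.
lemma lintegral_exp_mul_sq_le_of_hasSubgaussianMGF (hX : HasSubgaussianMGF X c μ) {a : ℝ}
    (ha : 0 ≤ a) (hac : 2 * (a * c) < 1) :
    ∫⁻ ω, ENNReal.ofReal (Real.exp (a * X ω ^ 2)) ∂μ ≤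
      ENNReal.ofReal (√(1 - 2 * (a * c)))⁻¹ := by
  have hsq : √(2 * a) ^ 2 = 2 * a := Real.sq_sqrt (by positivity)
  have hlinearize (ω : Ω) : ENNReal.ofReal (Real.exp (a * X ω ^ 2)) =
      ∫⁻ y, ENNReal.ofReal (Real.exp (√(2 * a) * X ω * y)) ∂gaussianReal 0 1 := by
    have hmgf := congrFun (mgf_fun_id_gaussianReal (μ := 0) (v := 1)) (√(2 * a) * X ω)
    simp only [mgf, NNReal.coe_one, one_mul, zero_mul, zero_add, mul_pow, hsq] at hmgf
    rw [← ofReal_integral_eq_lintegral_ofReal (integrable_exp_mul_gaussianReal _)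
      (ae_of_all _ fun y => (Real.exp_pos _).le), hmgf]
    ring_nf
  have hmgf_le (y : ℝ) : ∫⁻ ω, ENNReal.ofReal (Real.exp (√(2 * a) * X ω * y)) ∂μ ≤
      ENNReal.ofReal (Real.exp (a * c * y ^ 2)) := by
    simp_rw [mul_right_comm _ (X _) y]
    rw [← ofReal_integral_eq_lintegral_ofReal (hX.integrable_exp_mul _)
      (ae_of_all _ fun ω => (Real.exp_pos _).le)]
    refine ENNReal.ofReal_le_ofReal ((hX.mgf_le _).trans_eq ?_)
    rw [mul_pow, hsq]
    ring_nf
  have hX_meas : AEMeasurable X μ := hX.aemeasurable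
  calc ∫⁻ ω, ENNReal.ofReal (Real.exp (a * X ω ^ 2)) ∂μ
      = ∫⁻ ω, ∫⁻ y, ENNReal.ofReal (Real.exp (√(2 * a) * X ω * y)) ∂gaussianReal 0 1 ∂μ :=
        lintegral_congr hlinearize
    _ = ∫⁻ y, ∫⁻ ω, ENNReal.ofReal (Real.exp (√(2 * a) * X ω * y)) ∂μ ∂gaussianReal 0 1 := by
        refine lintegral_lintegral_swap ?_
        have : AEMeasurable (fun p : Ω × ℝ => X p.1) (μ.prod (gaussianReal 0 1)) := hX_meas.comp_fst
        simp only [Function.uncurry_def]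
        fun_prop
    _ ≤ ∫⁻ y, ENNReal.ofReal (Real.exp (a * c * y ^ 2)) ∂gaussianReal 0 1 :=
        lintegral_mono hmgf_le
    _ = ENNReal.ofReal (√(1 - 2 * (a * c)))⁻¹ := lintegral_exp_mul_sq_gaussianReal hac

lemma integrable_exp_mul_sq_of_hasSubgaussianMGF (hX : HasSubgaussianMGF X c μ) {a : ℝ}
    (ha : 0 ≤ a) (hac : 2 * (a * c) < 1) : Integrable (fun ω => Real.exp (a * X ω ^ 2)) μ := by
  have hX_meas : AEMeasurable X μ := hX.aemeasurable
  refine (lintegral_ofReal_ne_top_iff_integrable (by fun_prop)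
    (ae_of_all _ fun ω => (Real.exp_pos _).le)).1 ?_
  exact ((lintegral_exp_mul_sq_le_of_hasSubgaussianMGF hX ha hac).trans_lt
    ENNReal.ofReal_lt_top).ne

lemma integral_exp_mul_sq_le_of_hasSubgaussianMGF (hX : HasSubgaussianMGF X c μ) {a : ℝ}
    (ha : 0 ≤ a) (hac : 2 * (a * c) < 1) :
    ∫ ω, Real.exp (a * X ω ^ 2) ∂μ ≤ (√(1 - 2 * (a * c)))⁻¹ := by
  rw [← ENNReal.ofReal_le_ofReal_iff (by positivity), ofReal_integral_eq_lintegral_ofReal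
    (integrable_exp_mul_sq_of_hasSubgaussianMGF hX ha hac)
    (ae_of_all _ fun ω => (Real.exp_pos _).le)]
  exact lintegral_exp_mul_sq_le_of_hasSubgaussianMGF hX ha hac

end Subgaussian

section ProductLaw

variable {Ω : Type*} {mΩ : MeasurableSpace Ω} {P : Measure Ω}

lemma hasSubgaussianMGF_id_gaussianReal (v : NNReal) :
    HasSubgaussianMGF id v (gaussianReal 0 v) where
  integrable_exp_mul t := integrable_exp_mul_gaussianReal t
  mgf_le t := by simp [mgf_id_gaussianReal]

variable {ι : Type*} [Fintype ι] {E : ι → Type*} {mE : ∀ j, MeasurableSpace (E j)}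
  {ν : ∀ j, Measure (E j)} [∀ j, IsProbabilityMeasure (ν j)] {g : Ω → ∀ j, E j}

lemma measurePreserving_apply_of_map_eq_pi (hg : Measurable g) (hmap : P.map g = Measure.pi ν)
    (j : ι) : MeasurePreserving (fun ω => g ω j) P (ν j) :=
  (measurePreserving_eval ν j).comp ⟨hg, hmap⟩

lemma iIndepFun_of_map_eq_pi [IsProbabilityMeasure P] (hg : Measurable g)
    (hmap : P.map g = Measure.pi ν) : iIndepFun (fun j ω => g ω j) P := by
  have hmarginal (j : ι) := measurePreserving_apply_of_map_eq_pi hg hmap j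
  rw [iIndepFun_iff_map_fun_eq_pi_map fun j => (hmarginal j).aemeasurable]
  simp_rw [fun j => (hmarginal j).map_eq]
  exact hmap

lemma hasSubgaussianMGF_apply_of_map_eq_pi_gaussianReal {v : NNReal} {g : Ω → ι → ℝ}
    (hg : Measurable g) (hmap : P.map g = Measure.pi fun _ => gaussianReal 0 v) (j : ι) :
    HasSubgaussianMGF (fun ω => g ω j) v P := by
  have hmarginal := measurePreserving_apply_of_map_eq_pi hg hmap j
  rw [← HasSubgaussianMGF.id_map_iff hmarginal.aemeasurable, hmarginal.map_eq]
  exact hasSubgaussianMGF_id_gaussianReal v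

end ProductLaw

section OrderStatistics

variable {Ω : Type*} {mΩ : MeasurableSpace Ω} {P : Measure Ω} {d : ℕ} {g : Ω → Fin d → ℝ}

lemma measure_le_sharpOrd_le_choose_mul_pow (hindep : iIndepFun (fun j ω => g ω j) P) {s : ℝ}
    {p : ENNReal} (hp : ∀ j, P {ω | s ≤ |g ω j|} ≤ p) (i : Fin d) :
    P {ω | s ≤ sharpOrd (g ω) i} ≤ d.choose ((i : ℕ) + 1) * p ^ ((i : ℕ) + 1) := by
  have hjoint (S : Finset (Fin d)) : P (⋂ j ∈ S, {ω | s ≤ |g ω j|}) ≤ p ^ S.card := by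
    have hmeas : MeasurableSet {y : ℝ | s ≤ |y|} := measurableSet_le measurable_const (by fun_prop)
    exact (hindep.measure_inter_preimage_eq_mul S fun _ _ => hmeas).trans_le
      (Finset.prod_le_pow_card _ _ _ fun j _ => hp j)
  have hcover : {ω | s ≤ sharpOrd (g ω) i} ⊆
      ⋃ S ∈ Finset.powersetCard ((i : ℕ) + 1) Finset.univ, ⋂ j ∈ S, {ω | s ≤ |g ω j|} := by
    intro ω hω
    obtain ⟨S, hcard, hS⟩ := exists_card_eq_forall_sharpOrd_le_abs (g ω) i
    exact Set.mem_biUnion (Finset.mem_powersetCard.2 ⟨S.subset_univ, hcard⟩)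
      (Set.mem_iInter₂.2 fun j hj => le_trans hω (hS j hj))
  calc P {ω | s ≤ sharpOrd (g ω) i}
      ≤ ∑ S ∈ Finset.powersetCard ((i : ℕ) + 1) Finset.univ, P (⋂ j ∈ S, {ω | s ≤ |g ω j|}) :=
        (measure_mono hcover).trans (measure_biUnion_finset_le _ _)
    _ ≤ ∑ _S ∈ Finset.powersetCard ((i : ℕ) + 1) (Finset.univ : Finset (Fin d)),
          p ^ ((i : ℕ) + 1) :=
        Finset.sum_le_sum fun S hS => (hjoint S).trans_eq (by rw [(Finset.mem_powersetCard.1 hS).2])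
    _ = d.choose ((i : ℕ) + 1) * p ^ ((i : ℕ) + 1) := by simp

lemma integral_sharpOrd_sq_le_of_integral_exp_mul_sq_le [IsProbabilityMeasure P] {a M : ℝ}
    (ha : 0 < a) (hint : ∀ j, Integrable (fun ω => Real.exp (a * g ω j ^ 2)) P)
    (hM : ∀ j, ∫ ω, Real.exp (a * g ω j ^ 2) ∂P ≤ M) (i : Fin d) :
    ∫ ω, sharpOrd (g ω) i ^ 2 ∂P ≤
      a⁻¹ * (Real.log (Real.exp 1 * (d : ℝ) / ((i : ℕ) + 1)) + M) := by
  have hd : (0 : ℝ) < d := by exact_mod_cast i.pos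
  set L := Real.log (Real.exp 1 * (d : ℝ) / ((i : ℕ) + 1))
  have hpointwise (ω : Ω) : sharpOrd (g ω) i ^ 2 ≤
      a⁻¹ * (L + (d : ℝ)⁻¹ * ∑ j, Real.exp (a * g ω j ^ 2)) :=
    (le_inv_mul_iff₀ ha).2 (mul_sharpOrd_sq_le_log_add_sum_exp (g ω) i ha.le)
  have hmean : Integrable (fun ω => (d : ℝ)⁻¹ * ∑ j, Real.exp (a * g ω j ^ 2)) P :=
    (integrable_finsetSum _ fun j _ => hint j).const_mul _
  have hmean_le : (d : ℝ)⁻¹ * ∑ j, ∫ ω, Real.exp (a * g ω j ^ 2) ∂P ≤ M := by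
    rw [inv_mul_le_iff₀ hd]
    exact (Finset.sum_le_sum fun j _ => hM j).trans_eq (by simp)
  calc ∫ ω, sharpOrd (g ω) i ^ 2 ∂P
      ≤ ∫ ω, a⁻¹ * (L + (d : ℝ)⁻¹ * ∑ j, Real.exp (a * g ω j ^ 2)) ∂P :=
        integral_mono_of_nonneg (ae_of_all _ fun ω => sq_nonneg _)
          (((integrable_const L).add hmean).const_mul _) (ae_of_all _ hpointwise)
    _ = a⁻¹ * (L + (d : ℝ)⁻¹ * ∑ j, ∫ ω, Real.exp (a * g ω j ^ 2) ∂P) := by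
        rw [integral_const_mul, integral_add (integrable_const L) hmean, integral_const_mul,
          integral_finsetSum _ fun j _ => hint j, integral_const, probReal_univ, one_smul]
    _ ≤ a⁻¹ * (L + M) := by gcongr

variable [IsProbabilityMeasure P] {c : NNReal}

lemma measure_mul_sqrt_le_sharpOrd_le_of_hasSubgaussianMGF (hc : 0 < c)
    (hindep : iIndepFun (fun j ω => g ω j) P)
    (hg : ∀ j, HasSubgaussianMGF (fun ω => g ω j) c P) (i : Fin d) {t : ℝ} (ht : 3 ≤ t) :
    P {ω | t * √(c * Real.log (Real.exp 1 * (d : ℝ) / ((i : ℕ) + 1))) ≤ sharpOrd (g ω) i} ≤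
      ENNReal.ofReal (Real.exp (-(t ^ 2 / 4) * ((i : ℕ) + 1) *
        Real.log (Real.exp 1 * (d : ℝ) / ((i : ℕ) + 1)))) := by
  have hL := one_le_log_exp_one_mul_div_succ i
  have harith := choose_mul_two_mul_exp_pow_le i.val.succ_pos i.isLt ht
  push_cast [Nat.succ_eq_add_one] at harith
  set L := Real.log (Real.exp 1 * (d : ℝ) / ((i : ℕ) + 1))
  have hexponent : -(t * √(c * L)) ^ 2 / (2 * c) = -(t ^ 2 / 2) * L := by
    rw [mul_pow, Real.sq_sqrt (by positivity)]
    field_simp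
  have htail (j : Fin d) : P {ω | t * √(c * L) ≤ |g ω j|} ≤
      ENNReal.ofReal (2 * Real.exp (-(t ^ 2 / 2) * L)) := by
    rw [← hexponent]
    exact measure_le_abs_le_of_hasSubgaussianMGF (hg j) (by positivity)
  refine (measure_le_sharpOrd_le_choose_mul_pow hindep htail i).trans ?_
  rw [← ENNReal.ofReal_pow (by positivity), ← ENNReal.ofReal_natCast,
    ← ENNReal.ofReal_mul (by positivity)]
  exact ENNReal.ofReal_le_ofReal harith

lemma integral_sharpOrd_sq_le_of_hasSubgaussianMGF (hc : 0 < c)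
    (hg : ∀ j, HasSubgaussianMGF (fun ω => g ω j) c P) (i : Fin d) :
    ∫ ω, sharpOrd (g ω) i ^ 2 ∂P ≤
      4 * (1 + √2) * (c * Real.log (Real.exp 1 * (d : ℝ) / ((i : ℕ) + 1))) := by
  have hL := one_le_log_exp_one_mul_div_succ i
  set a : ℝ := (4 * c)⁻¹ with ha_def
  have ha : 0 < a := by positivity
  have hac : 2 * (a * c) = 1 / 2 := by
    rw [ha_def]
    field_simp
    norm_num
  have hlt : 2 * (a * c) < 1 := by linarith
  have hM (j : Fin d) : ∫ ω, Real.exp (a * g ω j ^ 2) ∂P ≤ √2 := by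
    refine (integral_exp_mul_sq_le_of_hasSubgaussianMGF (hg j) ha.le hlt).trans_eq ?_
    rw [hac, ← Real.sqrt_inv]
    norm_num
  refine (integral_sharpOrd_sq_le_of_integral_exp_mul_sq_le ha
    (fun j => integrable_exp_mul_sq_of_hasSubgaussianMGF (hg j) ha.le hlt) hM i).trans ?_
  set L := Real.log (Real.exp 1 * (d : ℝ) / ((i : ℕ) + 1))
  calc a⁻¹ * (L + √2) ≤ a⁻¹ * (L + √2 * L) := by
        gcongr
        exact le_mul_of_one_le_right (Real.sqrt_nonneg 2) hL
    _ = 4 * (1 + √2) * (c * L) := by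
        rw [ha_def, inv_inv]
        ring

theorem stmt14_general (hc : 0 < c) (hindep : iIndepFun (fun j ω => g ω j) P)
    (hg : ∀ j, HasSubgaussianMGF (fun ω => g ω j) c P) :
    (∀ i : Fin d, ∀ t : ℝ, 3 ≤ t →
      P {ω | t * √(c * Real.log (Real.exp 1 * (d : ℝ) / ((i : ℕ) + 1))) ≤
          sharpOrd (g ω) i} ≤
        ENNReal.ofReal (Real.exp (-(t ^ 2 / 4) * ((i : ℕ) + 1) *
          Real.log (Real.exp 1 * (d : ℝ) / ((i : ℕ) + 1))))) ∧
    (∀ i : Fin d,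
      ∫ ω, sharpOrd (g ω) i ^ 2 ∂P ≤
        4 * (1 + √2) * (c * Real.log (Real.exp 1 * (d : ℝ) / ((i : ℕ) + 1)))) :=
  ⟨fun i _ ht => measure_mul_sqrt_le_sharpOrd_le_of_hasSubgaussianMGF hc hindep hg i ht,
    integral_sharpOrd_sq_le_of_hasSubgaussianMGF hc hg⟩

end OrderStatistics

/-- order statistics of i.i.d. standard Gaussians: for `g₁, …, g_d` i.i.d.
standard Gaussian, the `i`-th largest absolute value `g_i^♯` satisfies the tail bound
`Pr(g_i^♯ ≥ t√(log(ed/i))) ≤ exp(-(t²/4) i log(ed/i))` for `t ≥ 3`, and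
`𝔼(g_i^♯)² ≤ c log(ed/i)` for an absolute constant `c`. (The `1`-based index `i`
corresponds to `(i : ℕ) + 1` for `i : Fin d`.) -/
theorem stmt14 : ∃ c : ℝ, 0 < c ∧
    ∀ (d : ℕ) (Ω : Type) [MeasurableSpace Ω] (P : Measure Ω) [IsProbabilityMeasure P],
    ∀ g : Ω → Fin d → ℝ, Measurable g →
    P.map g = Measure.pi (fun _ : Fin d => gaussianReal 0 1) →
    (∀ i : Fin d, ∀ t : ℝ, 3 ≤ t →
      P {ω | t * Real.sqrt (Real.log (Real.exp 1 * (d : ℝ) / ((i : ℕ) + 1))) ≤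
          sharpOrd (g ω) i} ≤
        ENNReal.ofReal (Real.exp (-(t ^ 2 / 4) * ((i : ℕ) + 1) *
          Real.log (Real.exp 1 * (d : ℝ) / ((i : ℕ) + 1))))) ∧
    (∀ i : Fin d,
      ∫ ω, (sharpOrd (g ω) i) ^ 2 ∂P ≤
        c * Real.log (Real.exp 1 * (d : ℝ) / ((i : ℕ) + 1))) := by
  refine ⟨4 * (1 + √2), by positivity, fun d Ω _ P _ g hg hmap => ?_⟩
  simpa only [NNReal.coe_one, one_mul] using stmt14_general one_pos (iIndepFun_of_map_eq_pi hg hmap)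
    (hasSubgaussianMGF_apply_of_map_eq_pi_gaussianReal hg hmap)
end

section
/- There exists an absolute constant C > 0 such that for every d ≥ 1 and all ρ, r > 0 with r ≤ ρ ≤ r√d, the Gaussian mean width of ρB₁^d ∩ rB₂^d satisfies E sup{ ⟨G, w⟩ : ‖w‖₁ ≤ ρ, ‖w‖₂ ≤ r } ≤ C·ρ·√(log(e d r²/ρ²)), where G is a standard Gaussian vector in ℝ^d. -/
open MeasureTheory ProbabilityTheory

/-!
Split `x` at a level `t` into a part with coordinates in `[-t, t]` and the excess
`(|xᵢ| - t)⁺`. Bounding the first part by `ℓ∞`–`ℓ₁` duality and the second by Cauchy–Schwarz gives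
`⟨x, w⟩ ≤ tρ + r ‖(|x| - t)⁺‖₂`, uniformly over `w ∈ ρB₁ ∩ rB₂`. If the coordinates are
sub-Gaussian with parameter `c`, the level `t = √(2cL)` makes the second moment of each excess at
most `2c e^{-L} / L`. For `L = log (e d r² / ρ²)` the factor `e^{-L}` compensates the number `d` of
coordinates, and both terms are of order `√c ρ √L`.
-/

section SupportFunction

variable {d : ℕ} {ρ r t : ℝ}

/-- The support function `x ↦ sup {⟨x, w⟩ : ‖w‖₁ ≤ ρ, ‖w‖₂ ≤ r}` of `ρB₁^d ∩ rB₂^d`; its Gaussian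
expectation is the mean width of this body. -/
noncomputable def l1l2SupportFunction (ρ r : ℝ) (x : Fin d → ℝ) : ℝ :=
  sSup ((fun w => iprod x w) '' {w : Fin d → ℝ | l1norm w ≤ ρ ∧ l2norm w ≤ r})

lemma l2norm_nonneg (x : Fin d → ℝ) : 0 ≤ l2norm x := Real.sqrt_nonneg _

lemma sq_l2norm (x : Fin d → ℝ) : l2norm x ^ 2 = ∑ i, x i ^ 2 :=
  Real.sq_sqrt (Finset.sum_nonneg fun _ _ => sq_nonneg _)

lemma iprod_le_mul_l1norm_add_l2norm_mul_l2norm (t : ℝ) (x w : Fin d → ℝ) :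
    iprod x w ≤ t * l1norm w + l2norm (fun i => (|x i| - t)⁺) * l2norm w := by
  calc iprod x w
      ≤ ∑ i, (t * |w i| + (|x i| - t)⁺ * |w i|) := by
        refine Finset.sum_le_sum fun i _ => ?_
        calc x i * w i ≤ |x i| * |w i| := (le_abs_self _).trans_eq (abs_mul _ _)
          _ ≤ (t + (|x i| - t)⁺) * |w i| := by
            gcongr
            linarith [le_posPart (|x i| - t)]
          _ = t * |w i| + (|x i| - t)⁺ * |w i| := add_mul _ _ _
    _ = t * l1norm w + ∑ i, (|x i| - t)⁺ * |w i| := by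
        rw [Finset.sum_add_distrib, ← Finset.mul_sum, l1norm]
    _ ≤ t * l1norm w + l2norm (fun i => (|x i| - t)⁺) * l2norm w := by
        gcongr
        simpa only [l2norm, sq_abs] using Real.sum_mul_le_sqrt_mul_sqrt Finset.univ
          (fun i => (|x i| - t)⁺) fun i => |w i|

lemma l1l2SupportFunction_nonneg (hρ : 0 ≤ ρ) (hr : 0 ≤ r) (x : Fin d → ℝ) :
    0 ≤ l1l2SupportFunction ρ r x :=
  Real.sSup_nonneg' ⟨0, ⟨0, by simp [l1norm, l2norm, hρ, hr], by simp [iprod]⟩, le_rfl⟩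

lemma l1l2SupportFunction_le (hρ : 0 ≤ ρ) (hr : 0 ≤ r) (ht : 0 ≤ t) (x : Fin d → ℝ) :
    l1l2SupportFunction ρ r x ≤ t * ρ + r * l2norm fun i => (|x i| - t)⁺ := by
  have hexcess := l2norm_nonneg fun i => (|x i| - t)⁺
  refine Real.sSup_le ?_ (by positivity)
  rintro _ ⟨w, ⟨hw₁, hw₂⟩, rfl⟩
  calc iprod x w ≤ t * l1norm w + l2norm (fun i => (|x i| - t)⁺) * l2norm w :=
        iprod_le_mul_l1norm_add_l2norm_mul_l2norm t x w
    _ ≤ t * ρ + l2norm (fun i => (|x i| - t)⁺) * r := by gcongr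
    _ = t * ρ + r * l2norm fun i => (|x i| - t)⁺ := by ring

end SupportFunction

section SecondMoment

variable {Ω : Type*} [MeasurableSpace Ω] {P : Measure Ω} {d : ℕ} {ρ r t : ℝ}

lemma sq_integral_le_integral_sq [IsProbabilityMeasure P] {Y : Ω → ℝ} (hY : MemLp Y 2 P) :
    (∫ ω, Y ω ∂P) ^ 2 ≤ ∫ ω, Y ω ^ 2 ∂P := by
  simpa only [variance_eq_sub hY, sub_nonneg, Pi.pow_apply] using variance_nonneg Y P

lemma memLp_two_l2norm {Y : Ω → Fin d → ℝ} (hY : ∀ i, MemLp (fun ω => Y ω i) 2 P) :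
    MemLp (fun ω => l2norm (Y ω)) 2 P := by
  have hmeas : AEStronglyMeasurable (fun ω => l2norm (Y ω)) P :=
    Real.continuous_sqrt.comp_aestronglyMeasurable
      (Finset.aestronglyMeasurable_fun_sum _ fun i _ => (hY i).1.pow 2)
  rw [memLp_two_iff_integrable_sq hmeas]
  simp only [sq_l2norm]
  exact integrable_finsetSum _ fun i _ => (hY i).integrable_sq

lemma integral_l2norm_le_sqrt [IsProbabilityMeasure P] {Y : Ω → Fin d → ℝ}
    (hY : ∀ i, MemLp (fun ω => Y ω i) 2 P) :
    ∫ ω, l2norm (Y ω) ∂P ≤ √(∑ i, ∫ ω, Y ω i ^ 2 ∂P) := by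
  refine Real.le_sqrt_of_sq_le ?_
  calc (∫ ω, l2norm (Y ω) ∂P) ^ 2 ≤ ∫ ω, l2norm (Y ω) ^ 2 ∂P :=
        sq_integral_le_integral_sq (memLp_two_l2norm hY)
    _ = ∑ i, ∫ ω, Y ω i ^ 2 ∂P := by
        simp only [sq_l2norm]
        exact integral_finsetSum _ fun i _ => (hY i).integrable_sq

lemma memLp_posPart_abs_sub [IsFiniteMeasure P] {X : Ω → ℝ} {p : ENNReal} (hX : MemLp X p P)
    (t : ℝ) : MemLp (fun ω => (|X ω| - t)⁺) p P :=
  (hX.abs.sub (memLp_const t)).pos_part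

lemma integral_l1l2SupportFunction_le [IsProbabilityMeasure P] {X : Ω → Fin d → ℝ}
    (hρ : 0 ≤ ρ) (hr : 0 ≤ r) (ht : 0 ≤ t) (hX : ∀ i, MemLp (fun ω => X ω i) 2 P) :
    ∫ ω, l1l2SupportFunction ρ r (X ω) ∂P ≤
      t * ρ + r * √(∑ i, ∫ ω, ((|X ω i| - t)⁺) ^ 2 ∂P) := by
  have hexcess (i : Fin d) : MemLp (fun ω => (|X ω i| - t)⁺) 2 P := memLp_posPart_abs_sub (hX i) t
  have hint : Integrable (fun ω => r * l2norm fun i => (|X ω i| - t)⁺) P :=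
    ((memLp_two_l2norm hexcess).integrable one_le_two).const_mul r
  calc ∫ ω, l1l2SupportFunction ρ r (X ω) ∂P
      ≤ ∫ ω, (t * ρ + r * l2norm fun i => (|X ω i| - t)⁺) ∂P :=
        integral_mono_of_nonneg
          (ae_of_all _ fun ω => l1l2SupportFunction_nonneg hρ hr (X ω))
          ((integrable_const _).add hint)
          (ae_of_all _ fun ω => l1l2SupportFunction_le hρ hr ht (X ω))
    _ = t * ρ + r * ∫ ω, l2norm (fun i => (|X ω i| - t)⁺) ∂P := by
        rw [integral_add (integrable_const _) hint, integral_const, probReal_univ, one_smul,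
          integral_const_mul]
    _ ≤ t * ρ + r * √(∑ i, ∫ ω, ((|X ω i| - t)⁺) ^ 2 ∂P) := by
        gcongr
        exact integral_l2norm_le_sqrt hexcess

end SecondMoment

section SubGaussian

variable {Ω : Type*} [MeasurableSpace Ω] {P : Measure Ω} {X : Ω → ℝ} {c : NNReal}

lemma posPart_sq_le_exp {a : ℝ} (ha : 0 < a) (y : ℝ) :
    y⁺ ^ 2 ≤ 2 / a ^ 2 * Real.exp (a * y) := by
  rcases le_total y 0 with hy | hy
  · rw [posPart_eq_zero.2 hy, zero_pow two_ne_zero]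
    positivity
  · have hay : 0 ≤ a * y := by positivity
    rw [posPart_eq_self.2 hy]
    calc y ^ 2 = 2 / a ^ 2 * ((a * y) ^ 2 / 2) := by field_simp
      _ ≤ 2 / a ^ 2 * Real.exp (a * y) := by
        gcongr
        linarith [Real.quadratic_le_exp_of_nonneg hay]

lemma posPart_abs_sub_sq_le_exp {a : ℝ} (ha : 0 < a) (t x : ℝ) :
    ((|x| - t)⁺) ^ 2 ≤
      2 / a ^ 2 * Real.exp (-(a * t)) * (Real.exp (a * x) + Real.exp (-a * x)) := by
  have habs : Real.exp (a * |x|) ≤ Real.exp (a * x) + Real.exp (-a * x) := by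
    simpa only [abs_mul, abs_of_pos ha, neg_mul] using Real.exp_abs_le (a * x)
  calc ((|x| - t)⁺) ^ 2 ≤ 2 / a ^ 2 * Real.exp (a * (|x| - t)) := posPart_sq_le_exp ha _
    _ = 2 / a ^ 2 * Real.exp (-(a * t)) * Real.exp (a * |x|) := by
      rw [mul_assoc, ← Real.exp_add]
      ring_nf
    _ ≤ _ := by gcongr

lemma integral_posPart_abs_sub_sq_le_exp (hX : HasSubgaussianMGF X c P) {a : ℝ} (ha : 0 < a)
    (t : ℝ) :
    ∫ ω, ((|X ω| - t)⁺) ^ 2 ∂P ≤ 4 / a ^ 2 * Real.exp (c * a ^ 2 / 2 - a * t) := by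
  have hpos := hX.integrable_exp_mul a
  have hneg := hX.integrable_exp_mul (-a)
  have hmgf_neg : mgf X P (-a) ≤ Real.exp (c * a ^ 2 / 2) := by
    simpa only [neg_sq] using hX.mgf_le (-a)
  calc ∫ ω, ((|X ω| - t)⁺) ^ 2 ∂P
      ≤ ∫ ω, 2 / a ^ 2 * Real.exp (-(a * t)) *
          (Real.exp (a * X ω) + Real.exp (-a * X ω)) ∂P :=
        integral_mono_of_nonneg (ae_of_all _ fun _ => sq_nonneg _)
          ((hpos.add hneg).const_mul _)
          (ae_of_all _ fun ω => posPart_abs_sub_sq_le_exp ha t (X ω))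
    _ = 2 / a ^ 2 * Real.exp (-(a * t)) * (mgf X P a + mgf X P (-a)) := by
        rw [integral_const_mul, integral_add hpos hneg, mgf, mgf]
    _ ≤ 2 / a ^ 2 * Real.exp (-(a * t)) *
          (Real.exp (c * a ^ 2 / 2) + Real.exp (c * a ^ 2 / 2)) := by
        gcongr
        exact hX.mgf_le a
    _ = 4 / a ^ 2 * Real.exp (c * a ^ 2 / 2 - a * t) := by
        rw [sub_eq_add_neg, Real.exp_add]
        ring

lemma integral_posPart_abs_sub_sqrt_sq_le (hX : HasSubgaussianMGF X c P) {L : ℝ} (hL : 0 < L) :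
    ∫ ω, ((|X ω| - √(2 * c * L))⁺) ^ 2 ∂P ≤ 2 * c / L * Real.exp (-L) := by
  rcases eq_zero_or_pos c with rfl | hc
  · refine (integral_eq_zero_of_ae ?_).trans_le (by positivity)
    filter_upwards [hX.ae_eq_zero_of_hasSubgaussianMGF_zero] with ω hω
    simp [hω]
  · -- `√(2L/c)` minimises the exponent `c a² / 2 - a √(2cL)`.
    have ha : 0 < √(2 * L / c) := by positivity
    have hasq : √(2 * L / c) ^ 2 = 2 * L / c := Real.sq_sqrt (by positivity)
    have hat : √(2 * L / c) * √(2 * c * L) = 2 * L := by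
      calc √(2 * L / c) * √(2 * c * L) = √((2 * L) ^ 2) := by
            rw [← Real.sqrt_mul (by positivity)]
            congr 1
            field_simp
        _ = 2 * L := Real.sqrt_sq (by positivity)
    have hexponent : c * (2 * L / c) / 2 - 2 * L = -L := by
      field_simp
      ring
    refine (integral_posPart_abs_sub_sq_le_exp hX ha _).trans_eq ?_
    rw [hat, hasq, hexponent]
    field_simp
    norm_num

lemma hasSubgaussianMGF_of_map_eq_gaussianReal {v : NNReal} (hX : P.map X = gaussianReal 0 v) :
    HasSubgaussianMGF X v P where
  integrable_exp_mul s := .of_integral_ne_zero <| by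
    have := mgf_gaussianReal hX s
    rw [mgf] at this
    exact this ▸ (Real.exp_pos _).ne'
  mgf_le s := by rw [mgf_gaussianReal hX, zero_mul, zero_add]

lemma hasSubgaussianMGF_eval_of_map_eq_pi_gaussianReal {ι : Type*} [Fintype ι] {G : Ω → ι → ℝ}
    {v : ι → NNReal} (hG : AEMeasurable G P)
    (hmap : P.map G = Measure.pi fun i => gaussianReal 0 (v i)) (i : ι) :
    HasSubgaussianMGF (fun ω => G ω i) (v i) P := by
  refine hasSubgaussianMGF_of_map_eq_gaussianReal ?_
  calc P.map (fun ω => G ω i) = (P.map G).map (Function.eval i) :=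
        (AEMeasurable.map_map_of_aemeasurable (measurable_pi_apply i).aemeasurable hG).symm
    _ = gaussianReal 0 (v i) := by
        rw [hmap]
        exact (measurePreserving_eval (fun i => gaussianReal 0 (v i)) i).map_eq

end SubGaussian

section MeanWidth

variable {d : ℕ} {ρ r : ℝ}

lemma one_le_log_exp_one_mul_mul_sq_div_sq (hρ : 0 < ρ) (hρd : ρ ≤ r * √d) :
    1 ≤ Real.log (Real.exp 1 * d * r ^ 2 / ρ ^ 2) := by
  have hsq : ρ ^ 2 ≤ d * r ^ 2 := by
    calc ρ ^ 2 ≤ (r * √d) ^ 2 := by gcongr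
      _ = d * r ^ 2 := by rw [mul_pow, Real.sq_sqrt d.cast_nonneg, mul_comm]
  have hexp : Real.exp 1 ≤ Real.exp 1 * d * r ^ 2 / ρ ^ 2 := by
    rw [le_div_iff₀ (by positivity), mul_assoc]
    gcongr
  exact (Real.le_log_iff_exp_le ((Real.exp_pos 1).trans_le hexp)).2 hexp

variable {Ω : Type*} [MeasurableSpace Ω] {P : Measure Ω} [IsProbabilityMeasure P]
  {X : Ω → Fin d → ℝ} {c : NNReal}

lemma integral_l1l2SupportFunction_le_of_hasSubgaussianMGF {L : ℝ} (hρ : 0 ≤ ρ) (hr : 0 ≤ r)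
    (hL : 0 < L) (hX : ∀ i, HasSubgaussianMGF (fun ω => X ω i) c P) :
    ∫ ω, l1l2SupportFunction ρ r (X ω) ∂P ≤
      √(2 * c * L) * ρ + r * √(d * (2 * c / L * Real.exp (-L))) := by
  refine (integral_l1l2SupportFunction_le hρ hr (Real.sqrt_nonneg (2 * c * L))
    fun i => (hX i).memLp 2).trans ?_
  gcongr
  calc ∑ i, ∫ ω, ((|X ω i| - √(2 * c * L))⁺) ^ 2 ∂P
      ≤ ∑ _i : Fin d, 2 * c / L * Real.exp (-L) :=
        Finset.sum_le_sum fun i _ => integral_posPart_abs_sub_sqrt_sq_le (hX i) hL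
    _ = d * (2 * c / L * Real.exp (-L)) := by simp

lemma integral_l1l2SupportFunction_le_of_mul_exp_neg_le {L : ℝ} (hρ : 0 ≤ ρ) (hr : 0 ≤ r)
    (hL : 1 ≤ L) (hLρ : d * r ^ 2 * Real.exp (-L) ≤ ρ ^ 2)
    (hX : ∀ i, HasSubgaussianMGF (fun ω => X ω i) c P) :
    ∫ ω, l1l2SupportFunction ρ r (X ω) ∂P ≤ 3 * √c * ρ * √L := by
  have htail : r * √(d * (2 * c / L * Real.exp (-L))) ≤ √(2 * c * L) * ρ := by
    have hinv : L⁻¹ ≤ L := (inv_le_one_of_one_le₀ hL).trans hL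
    refine (sq_le_sq₀ (by positivity) (by positivity)).1 ?_
    rw [mul_pow, mul_pow, Real.sq_sqrt (by positivity), Real.sq_sqrt (by positivity)]
    calc r ^ 2 * (d * (2 * c / L * Real.exp (-L)))
        = 2 * c * L⁻¹ * (d * r ^ 2 * Real.exp (-L)) := by ring
      _ ≤ 2 * c * L * ρ ^ 2 := by gcongr
  have hsqrt_two : 2 * √2 ≤ 3 := by
    have : √2 ≤ 3 / 2 := Real.sqrt_le_iff.2 (by norm_num)
    linarith
  calc ∫ ω, l1l2SupportFunction ρ r (X ω) ∂P
      ≤ √(2 * c * L) * ρ + r * √(d * (2 * c / L * Real.exp (-L))) :=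
        integral_l1l2SupportFunction_le_of_hasSubgaussianMGF hρ hr (by linarith) hX
    _ ≤ √(2 * c * L) * ρ + √(2 * c * L) * ρ := by gcongr
    _ = 2 * √2 * √c * ρ * √L := by
        rw [Real.sqrt_mul (by positivity), Real.sqrt_mul zero_le_two]
        ring
    _ ≤ 3 * √c * ρ * √L := by gcongr

theorem stmt18_general (hρ : 0 < ρ) (hρd : ρ ≤ r * √d)
    (hX : ∀ i, HasSubgaussianMGF (fun ω => X ω i) c P) :
    (∫ ω, sSup ((fun w => iprod (X ω) w) ''
        {w : Fin d → ℝ | l1norm w ≤ ρ ∧ l2norm w ≤ r}) ∂P) ≤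
      3 * √c * ρ * √(Real.log (Real.exp 1 * d * r ^ 2 / ρ ^ 2)) := by
  have hr : 0 < r := pos_of_mul_pos_left (hρ.trans_le hρd) (Real.sqrt_nonneg d)
  have hd : (0 : ℝ) < d := Real.sqrt_pos.1 (pos_of_mul_pos_right (hρ.trans_le hρd) hr.le)
  refine integral_l1l2SupportFunction_le_of_mul_exp_neg_le hρ.le hr.le
    (one_le_log_exp_one_mul_mul_sq_div_sq hρ hρd) ?_ hX
  calc d * r ^ 2 * Real.exp (-Real.log (Real.exp 1 * d * r ^ 2 / ρ ^ 2))
      = ρ ^ 2 / Real.exp 1 := by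
        rw [Real.exp_neg, Real.exp_log (by positivity)]
        field_simp
    _ ≤ ρ ^ 2 := div_le_self (sq_nonneg ρ) (Real.one_le_exp zero_le_one)

end MeanWidth

/-- there is an absolute constant `C > 0` such that for all `d ≥ 1` and
`r ≤ ρ ≤ r√d`, the Gaussian mean width of `ρB₁^d ∩ rB₂^d` is at most
`Cρ√(log(edr²/ρ²))`. -/
theorem stmt18 : ∃ C : ℝ, 0 < C ∧
    ∀ (d : ℕ), 1 ≤ d →
    ∀ ρ r : ℝ, 0 < r → r ≤ ρ → ρ ≤ r * Real.sqrt d →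
    ∀ (Ω : Type) [MeasurableSpace Ω] (P : Measure Ω) [IsProbabilityMeasure P],
    ∀ G : Ω → Fin d → ℝ, Measurable G →
    P.map G = Measure.pi (fun _ : Fin d => gaussianReal 0 1) →
    (∫ ω, sSup ((fun w => iprod (G ω) w) ''
        {w : Fin d → ℝ | l1norm w ≤ ρ ∧ l2norm w ≤ r}) ∂P) ≤
      C * ρ * Real.sqrt (Real.log (Real.exp 1 * (d : ℝ) * r ^ 2 / ρ ^ 2)) := by
  refine ⟨3, by norm_num, fun d _ ρ r hr hrρ hρd Ω _ P _ G hG hmap => ?_⟩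
  simpa using stmt18_general (hr.trans_le hrρ) hρd
    (hasSubgaussianMGF_eval_of_map_eq_pi_gaussianReal hG.aemeasurable hmap)
end
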